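/- Let G be a (possibly infinite) graph and let s, t ∈ V(G) be distinct. If there is no non-trivial st-wave in G, then there exists a system 𝒫 of pairwise edge-disjoint st-paths covering δ(s), and δ(s) is the unique Erdős–Menger st-cut. -/

import Mathlib

/-!
Common definitions: multigraphs (parallel edges allowed, no loops), walks,
paths, cuts, waves and related notions used in the statements below.
-/

universe u v

/-- A multigraph with vertex type `V` and edge type `E`: every edge is assigned
an unordered pair of *distinct* end-vertices (parallel edges allowed, no loops). -/
structure Multigraph (V : Type u) (E : Type v) : Type (max u v) where
  inc : E → Sym2 V
  not_isDiag : ∀ e, ¬ (inc e).IsDiag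

namespace Multigraph

variable {V : Type u} {E : Type v}

/-- Walks in a multigraph, recorded together with the edges they traverse. -/
inductive Walk (G : Multigraph V E) : V → V → Type (max u v)
  | nil (v : V) : Walk G v v
  | cons {u v w : V} (e : E) (he : G.inc e = s(u, v)) (p : Walk G v w) : Walk G u w

namespace Walk

variable {G : Multigraph V E}

/-- The list of vertices visited by a walk. -/
def support : ∀ {u w : V}, G.Walk u w → List V
  | _, _, .nil v => [v]
  | u, _, .cons _ _ p => u :: p.support

/-- The list of edges traversed by a walk. -/
def edges : ∀ {u w : V}, G.Walk u w → List E
  | _, _, .nil _ => []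
  | _, _, .cons e _ p => e :: p.edges

end Walk

/-- `δ_G(v)`: the set of edges incident with the vertex `v`. -/
def inci (G : Multigraph V E) (v : V) : Set E := {e | v ∈ G.inc e}

/-- `δ_G(X)`: the set of edges with exactly one end-vertex in `X`. -/
def cut (G : Multigraph V E) (X : Set V) : Set E :=
  {e | ∃ x y, G.inc e = s(x, y) ∧ x ∈ X ∧ y ∉ X}

/-- Connectedness of a multigraph. -/
def Connected (G : Multigraph V E) : Prop := ∀ u v : V, Nonempty (G.Walk u v)

/-- A `T`-path: a path connecting two distinct vertices of `T`
with no internal vertex in `T`. -/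
structure TPath (G : Multigraph V E) (T : Set V) : Type (max u v) where
  first : V
  last : V
  walk : G.Walk first last
  first_mem : first ∈ T
  last_mem : last ∈ T
  ne : first ≠ last
  support_nodup : walk.support.Nodup
  internal : ∀ x ∈ walk.support, x ∈ T → x = first ∨ x = last

/-- A system of pairwise edge-disjoint `T`-paths. -/
def TPathDisjoint (G : Multigraph V E) {T : Set V} (P : Set (G.TPath T)) : Prop :=
  ∀ p ∈ P, ∀ q ∈ P, p ≠ q → ∀ e, e ∈ p.walk.edges → e ∉ q.walk.edges

/-- An `st`-path: a path from `s` to `t` (no internal vertex is `s` or `t`,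
which is automatic as the vertices of a path are distinct). -/
structure STPath (G : Multigraph V E) (s t : V) : Type (max u v) where
  walk : G.Walk s t
  support_nodup : walk.support.Nodup

/-- A system of pairwise edge-disjoint `st`-paths. -/
def STPathDisjoint (G : Multigraph V E) {s t : V} (P : Set (G.STPath s t)) : Prop :=
  ∀ p ∈ P, ∀ q ∈ P, p ≠ q → ∀ e, e ∈ p.walk.edges → e ∉ q.walk.edges

/-- A nontrivial path starting at `s`. -/
structure SPath (G : Multigraph V E) (s : V) : Type (max u v) where
  last : V
  walk : G.Walk s last
  support_nodup : walk.support.Nodup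
  edges_ne_nil : walk.edges ≠ []

/-- A system of pairwise edge-disjoint paths starting at `s`. -/
def SPathDisjoint (G : Multigraph V E) {s : V} (W : Set (G.SPath s)) : Prop :=
  ∀ p ∈ W, ∀ q ∈ W, p ≠ q → ∀ e, e ∈ p.walk.edges → e ∉ q.walk.edges

/-- The set of last edges of a system of paths starting at `s`. -/
def lastEdges (G : Multigraph V E) {s : V} (W : Set (G.SPath s)) : Set E :=
  {e | ∃ p ∈ W, p.walk.edges.getLast? = some e}

/-- `C` is a cut separating `A` from `B`. -/
def SepCut (G : Multigraph V E) (A B : Set V) (C : Set E) : Prop :=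
  ∃ X : Set V, A ⊆ X ∧ (∀ b ∈ B, b ∉ X) ∧ C = G.cut X

/-- `C` is a `⊆`-minimal cut separating `A` from `B`. -/
def IsMinSepCut (G : Multigraph V E) (A B : Set V) (C : Set E) : Prop :=
  G.SepCut A B C ∧ ∀ D : Set E, G.SepCut A B D → D ⊆ C → D = C

/-- An `s`-`B`-wave: a system of pairwise edge-disjoint paths starting at `s`
whose set of last edges is a `⊆`-minimal cut separating `s` from `B`. -/
def IsWave (G : Multigraph V E) (s : V) (B : Set V) (W : Set (G.SPath s)) : Prop :=
  G.SPathDisjoint W ∧ G.IsMinSepCut {s} B (G.lastEdges W)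

/-- An Erdős–Menger `st`-cut: an `st`-cut which is orthogonal to some system of
pairwise edge-disjoint `st`-paths, i.e. it consists of exactly one edge chosen
from each path of the system. -/
def IsEMCut (G : Multigraph V E) (s t : V) (C : Set E) : Prop :=
  (∃ X : Set V, s ∈ X ∧ t ∉ X ∧ C = G.cut X) ∧
  ∃ P : Set (G.STPath s t), G.STPathDisjoint P ∧
    (∀ p ∈ P, ∃! e, e ∈ C ∧ e ∈ p.walk.edges) ∧
    (∀ e ∈ C, ∃ p ∈ P, e ∈ p.walk.edges)

/-- The order `≼` on `st`-cuts: the `s`-side of `C` is contained in the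
`s`-side of `D` (in a connected graph the `s`-side is unique). -/
def CutLE (G : Multigraph V E) (s t : V) (C D : Set E) : Prop :=
  ∃ X Y : Set V, s ∈ X ∧ t ∉ X ∧ C = G.cut X ∧ s ∈ Y ∧ t ∉ Y ∧ D = G.cut Y ∧ X ⊆ Y

/-- A cut of the form `C_W` for some `st`-wave `W`. -/
def IsWaveCut (G : Multigraph V E) (s t : V) (C : Set E) : Prop :=
  ∃ W : Set (G.SPath s), G.IsWave s {t} W ∧ G.lastEdges W = C

/-- Deletion of a set of edges. -/
def deleteEdges (G : Multigraph V E) (F : Set E) : Multigraph V {e : E // e ∉ F} where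
  inc e := G.inc e.1
  not_isDiag e := G.not_isDiag e.1

open Classical in
/-- Contraction of the vertex set `X` to the vertex `s` (edges inside `X` are
deleted, edges leaving `X` are redirected to `s`). -/
noncomputable def contract (G : Multigraph V E) (X : Set V) (s : V) :
    Multigraph V {e : E // ¬ (Sym2.map (fun v => if v ∈ X then s else v) (G.inc e)).IsDiag} where
  inc e := Sym2.map (fun v => if v ∈ X then s else v) (G.inc e.1)
  not_isDiag e := e.2

/-- Reachability inside a set `S` of vertices. -/
def ReachableIn (G : Multigraph V E) (S : Set V) (x y : V) : Prop :=
  ∃ p : G.Walk x y, ∀ z ∈ p.support, z ∈ S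

/-- `Y` is (the vertex set of) a connected component of the subgraph of `G`
induced by `S`. -/
def IsComponentOf (G : Multigraph V E) (Y S : Set V) : Prop :=
  Y.Nonempty ∧ Y ⊆ S ∧ ∀ x ∈ Y, ∀ y ∈ S, (G.ReachableIn S x y ↔ y ∈ Y)

/-- A cycle in a multigraph (a closed walk with distinct edges whose
vertices are distinct except that the first one equals the last one). -/
structure Cycle (G : Multigraph V E) : Type (max u v) where
  base : V
  walk : G.Walk base base
  edges_ne_nil : walk.edges ≠ []
  edges_nodup : walk.edges.Nodup
  support_tail_nodup : walk.support.tail.Nodup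

/-- A graph is Eulerian if its edge set can be partitioned into
edge sets of cycles. -/
def IsEulerian (G : Multigraph V E) : Prop :=
  ∃ C : Set G.Cycle,
    (∀ c ∈ C, ∀ d ∈ C, c ≠ d → ∀ e, e ∈ c.walk.edges → e ∉ d.walk.edges) ∧
    ∀ e : E, ∃ c ∈ C, e ∈ c.walk.edges

/-- A `T`-partition: a family `{A t : t ∈ T}` of pairwise disjoint vertex sets
with `A t ∩ T = {t}`. -/
def IsTPartition (T : Set V) (A : V → Set V) : Prop :=
  (∀ t ∈ T, A t ∩ T = {t}) ∧
  ∀ t₁ ∈ T, ∀ t₂ ∈ T, t₁ ≠ t₂ → Disjoint (A t₁) (A t₂)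

end Multigraph

/-!
Take the edges of `G` as the vertices of a web, with `δ(s)` as the set of sources and `δ(t)` as the
set of sinks. A wave of this web missing a source, a hindrance, has a front containing a minimal
`st`-cut different from `δ(s)`, hence yields a non-trivial `st`-wave. So the edge web is unhindered,
and it suffices to link all sources of an unhindered web to its sinks by disjoint paths, which is a
theorem of Aharoni and Berger.

A single source can be linked by a finite path whose deletion keeps the web unhindered. Moreover,
the web remains unhindered after deleting club many of the sets of size `< κ`, for each regular
`κ`: otherwise stationarily many hindrances could be assembled, along a tower of length `κ`, into a
hindrance of the web itself. By induction on `κ` it follows that stationarily many sets of size `<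
κ` are closed under a linkage of their sources, and a large `κ` gives the linkage of all sources.

For uniqueness, cut off the paths orthogonal to an Erdős–Menger cut at their edges in the cut: the
result is a wave, which has to be trivial.
-/

/-! ### Webs and waves -/

universe w

/-- A web: a digraph with a set of sources, entered by no arc, and a set of sinks. -/
structure Web (Ω : Type w) where
  Arc : Ω → Ω → Prop
  source : Set Ω
  sink : Set Ω
  notMem_source_of_arc : ∀ {x y}, Arc x y → y ∉ source

namespace Web

variable {Ω : Type w} {N : Web Ω}

/-- Iterating `pred` from the point leads into `A`. -/
inductive Rooted (A : Set Ω) (pred : Ω → Ω) : Ω → Prop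
  | base {a : Ω} (ha : a ∈ A) : Rooted A pred a
  | step {u : Ω} (hu : Rooted A pred (pred u)) : Rooted A pred u

theorem Rooted.transfer {A P : Set Ω} {p q : Ω → Ω}
    (h : ∀ u ∈ P, u ∉ A → (q u = p u ∧ p u ∈ P) ∨ Rooted A q u)
    {u : Ω} (hr : Rooted A p u) (hu : u ∈ P) : Rooted A q u := by
  induction hr with
  | base ha => exact .base ha
  | @step u _ ih =>
    by_cases huA : u ∈ A
    · exact .base huA
    · rcases h u hu huA with ⟨hqp, hP⟩ | hq
      · exact .step (hqp ▸ ih hP)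
      · exact hq

/-- A warp: a family of disjoint finite paths starting in the sources. It is recorded by its
vertex set `U` and by the function sending a vertex to its predecessor on its path, whose values
at sources and outside `U` are irrelevant. -/
structure IsWarp (N : Web Ω) (U : Set Ω) (pred : Ω → Ω) : Prop where
  pred_mem : ∀ u ∈ U, u ∉ N.source → pred u ∈ U
  arc_pred : ∀ u ∈ U, u ∉ N.source → N.Arc (pred u) u
  pred_injOn : Set.InjOn pred (U \ N.source)
  rooted : ∀ u ∈ U, Rooted N.source pred u

/-- The data of a wave: a warp `(verts, pred)` together with the set `front` separating the
sources from the sinks, and the set `interior` of vertices strictly in front of it. -/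
structure Wave (Ω : Type w) where
  interior : Set Ω
  front : Set Ω
  verts : Set Ω
  pred : Ω → Ω

namespace Wave

/-- The roof of a wave: the vertices separated by its front from the sinks. -/
def roof (k : Wave Ω) : Set Ω := k.interior ∪ k.front

@[grind =] theorem mem_roof {k : Wave Ω} {u : Ω} : u ∈ k.roof ↔ u ∈ k.interior ∨ u ∈ k.front :=
  Iff.rfl

/-- The wave `l` continues the wave `k`: it agrees with `k` on the roof of `k`. -/
structure Extends (k l : Wave Ω) : Prop where
  interior_subset : k.interior ⊆ l.interior
  roof_subset : k.roof ⊆ l.roof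
  mem_verts_iff : ∀ x ∈ k.roof, (x ∈ k.verts ↔ x ∈ l.verts)
  pred_eqOn : Set.EqOn l.pred k.pred k.roof

@[refl] theorem Extends.refl (k : Wave Ω) : Extends k k :=
  ⟨subset_rfl, subset_rfl, fun _ _ => Iff.rfl, fun _ _ => rfl⟩

theorem Extends.trans {k l m : Wave Ω} (h : Extends k l) (h' : Extends l m) : Extends k m where
  interior_subset := h.interior_subset.trans h'.interior_subset
  roof_subset := h.roof_subset.trans h'.roof_subset
  mem_verts_iff x hx := (h.mem_verts_iff x hx).trans (h'.mem_verts_iff x (h.roof_subset hx))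
  pred_eqOn _ hx := (h'.pred_eqOn (h.roof_subset hx)).trans (h.pred_eqOn hx)

instance : Std.Refl (Extends (Ω := Ω)) := ⟨.refl⟩

open Classical in
/-- The wave obtained by following `k` up to its front, and `l` from there on. -/
noncomputable def append (k l : Wave Ω) : Wave Ω where
  interior := k.interior ∪ l.interior
  front := (k.front ∪ l.front) \ (k.interior ∪ l.interior)
  verts := k.verts ∪ l.verts \ k.roof
  pred := k.roof.piecewise k.pred l.pred

@[simp, grind =] theorem append_interior (k l : Wave Ω) :
    (k.append l).interior = k.interior ∪ l.interior := rfl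

@[grind =] theorem append_front (k l : Wave Ω) :
    (k.append l).front = (k.front ∪ l.front) \ (k.interior ∪ l.interior) := rfl

@[grind =] theorem append_verts (k l : Wave Ω) :
    (k.append l).verts = k.verts ∪ l.verts \ k.roof := rfl

@[simp, grind =] theorem append_roof (k l : Wave Ω) : (k.append l).roof = k.roof ∪ l.roof := by
  ext; grind

@[grind =>] theorem append_pred_of_mem {k : Wave Ω} (l : Wave Ω) {u : Ω} (hu : u ∈ k.roof) :
    (k.append l).pred u = k.pred u := by
  classical exact Set.piecewise_eq_of_mem _ _ _ hu

@[grind =>] theorem append_pred_of_notMem {k : Wave Ω} (l : Wave Ω) {u : Ω} (hu : u ∉ k.roof) :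
    (k.append l).pred u = l.pred u := by
  classical exact Set.piecewise_eq_of_notMem _ _ _ hu

theorem extends_append (k l : Wave Ω) : Extends k (k.append l) where
  interior_subset := Set.subset_union_left
  roof_subset := by simp
  mem_verts_iff x hx := by grind
  pred_eqOn _ hx := append_pred_of_mem l hx

open Classical in
/-- The union of a directed family of waves. -/
noncomputable def limit {ι : Type*} (f : ι → Wave Ω) : Wave Ω where
  interior := ⋃ i, (f i).interior
  front := (⋃ i, (f i).front) \ ⋃ i, (f i).interior
  verts := ⋃ i, (f i).verts
  pred u := if h : ∃ i, u ∈ (f i).roof then (f h.choose).pred u else u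

section limit

variable {ι : Type*} {f : ι → Wave Ω}

@[simp] theorem limit_roof : (limit f).roof = ⋃ i, (f i).roof := by
  simp only [roof, limit, Set.union_sdiff_self, Set.iUnion_union_distrib]

theorem mem_limit_verts {u : Ω} : u ∈ (limit f).verts ↔ ∃ i, u ∈ (f i).verts := Set.mem_iUnion

theorem limit_pred (hf : Directed Extends f) (i : ι) :
    Set.EqOn (limit f).pred (f i).pred (f i).roof := by
  intro u hu
  have h : ∃ i, u ∈ (f i).roof := ⟨i, hu⟩
  obtain ⟨k, hik, hk⟩ := hf i h.choose
  simp only [limit, dif_pos h]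
  rw [← hk.pred_eqOn h.choose_spec, hik.pred_eqOn hu]

end limit

end Wave

open Wave

/-- The front of `k` separates the sources from the sinks in the web `N - I`. -/
structure IsSeparating (N : Web Ω) (I : Set Ω) (k : Wave Ω) : Prop where
  roof_disjoint : Disjoint k.roof I
  interior_disjoint_front : Disjoint k.interior k.front
  interior_disjoint_sink : Disjoint k.interior N.sink
  mem_roof_of_source : ∀ a ∈ N.source, a ∉ I → a ∈ k.roof
  arc_closed : ∀ x ∈ k.interior, ∀ y, N.Arc x y → y ∈ k.roof ∪ I

/-- The warp of `k` covers its front and runs in its interior before reaching it. -/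
structure IsLinked (N : Web Ω) (k : Wave Ω) : Prop extends IsWarp N k.verts k.pred where
  pred_mem_interior : ∀ u ∈ k.verts, u ∉ N.source → k.pred u ∈ k.interior
  verts_subset_roof : k.verts ⊆ k.roof
  front_subset_verts : k.front ⊆ k.verts

/-- `k` is a wave in the web `N - I`. -/
structure IsWave (N : Web Ω) (I : Set Ω) (k : Wave Ω) : Prop
    extends IsSeparating N I k, IsLinked N k

/-- No wave of the web `N - I` misses a source. -/
def Unhindered (N : Web Ω) (I : Set Ω) : Prop :=
  ∀ k, IsWave N I k → N.source \ I ⊆ k.verts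

theorem IsSeparating.append {I J : Set Ω} {k l : Wave Ω} (hk : IsSeparating N I k)
    (hl : IsSeparating N J l) (hI : Disjoint I l.roof) (hJ : J ⊆ I ∪ k.roof) :
    IsSeparating N I (k.append l) where
  roof_disjoint := by
    rw [append_roof]
    exact Set.disjoint_union_left.2 ⟨hk.roof_disjoint, hI.symm⟩
  interior_disjoint_front := Set.disjoint_sdiff_right
  interior_disjoint_sink :=
    Set.disjoint_union_left.2 ⟨hk.interior_disjoint_sink, hl.interior_disjoint_sink⟩
  mem_roof_of_source a ha haI := by
    rw [append_roof]
    exact .inl (hk.mem_roof_of_source a ha haI)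
  arc_closed x hx y hxy := by
    have := hk.arc_closed x
    have := hl.arc_closed x
    grind

theorem IsLinked.append_pred_of_mem {k : Wave Ω} (hk : IsLinked N k) (l : Wave Ω) {u : Ω}
    (hu : u ∈ k.verts) : (k.append l).pred u = k.pred u :=
  Wave.append_pred_of_mem l (hk.verts_subset_roof hu)

theorem IsLinked.isWarp_append {k l : Wave Ω} (hk : IsLinked N k) (hl : IsLinked N l)
    (h : ∀ u ∈ l.verts \ k.roof, u ∉ N.source → l.pred u ∉ k.interior) :
    IsWarp N (k.append l).verts (k.append l).pred := by
  have hpred : ∀ u ∈ l.verts \ k.roof, u ∉ N.source → l.pred u ∈ k.verts ∪ l.verts \ k.roof := by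
    intro u hu huA
    have := hl.pred_mem u hu.1 huA
    have := @hk.front_subset_verts (l.pred u)
    grind
  have hrk : ∀ u ∈ k.verts, Rooted N.source (k.append l).pred u := fun u hu =>
    (hk.rooted u hu).transfer
      (fun v hv hvA => .inl ⟨hk.append_pred_of_mem l hv, hk.pred_mem v hv hvA⟩) hu
  refine ⟨?_, ?_, ?_, ?_⟩
  · rintro u (hu | hu) huA
    · rw [hk.append_pred_of_mem l hu]; exact .inl (hk.pred_mem u hu huA)
    · rw [append_pred_of_notMem l hu.2]; exact hpred u hu huA
  · rintro u (hu | hu) huA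
    · rw [hk.append_pred_of_mem l hu]; exact hk.arc_pred u hu huA
    · rw [append_pred_of_notMem l hu.2]; exact hl.arc_pred u hu.1 huA
  · rintro u ⟨hu, huA⟩ v ⟨hv, hvA⟩ huv
    have := hk.pred_injOn (x₁ := u) (x₂ := v)
    have := hl.pred_injOn (x₁ := u) (x₂ := v)
    have := hk.pred_mem_interior u
    have := hk.pred_mem_interior v
    have hkp := fun u => hk.append_pred_of_mem l (u := u)
    grind
  · rintro u (hu | hu)
    · exact hrk u hu
    · refine (hl.rooted u hu.1).transfer (P := l.verts \ k.roof) (fun v hv hvA => ?_) hu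
      rcases hpred v hv hvA with hvk | hvl
      · exact .inr (.step (append_pred_of_notMem l hv.2 ▸ hrk _ hvk))
      · exact .inl ⟨append_pred_of_notMem l hv.2, hvl⟩

theorem IsLinked.append {k l : Wave Ω} (hk : IsLinked N k) (hl : IsLinked N l)
    (h : ∀ u ∈ l.verts \ k.roof, u ∉ N.source → l.pred u ∉ k.interior) :
    IsLinked N (k.append l) where
  toIsWarp := hk.isWarp_append hl h
  pred_mem_interior := by
    rintro u (hu | hu) huA
    · rw [hk.append_pred_of_mem l hu]; exact .inl (hk.pred_mem_interior u hu huA)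
    · rw [append_pred_of_notMem l hu.2]; exact .inr (hl.pred_mem_interior u hu.1 huA)
  verts_subset_roof := by
    rw [append_roof]
    exact Set.union_subset_union hk.verts_subset_roof
      (Set.sdiff_subset.trans hl.verts_subset_roof)
  front_subset_verts := by
    have := hk.front_subset_verts
    have := hl.front_subset_verts
    grind

theorem IsWave.append {I J : Set Ω} {k l : Wave Ω} (hk : IsWave N I k) (hl : IsWave N J l)
    (hI : Disjoint I l.roof) (hJ : J ⊆ I ∪ k.roof) : IsWave N I (k.append l) where
  toIsSeparating := hk.toIsSeparating.append hl.toIsSeparating hI hJ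
  toIsLinked := hk.toIsLinked.append hl.toIsLinked fun u hu huA huX => by
    rcases hk.arc_closed _ huX u (hl.arc_pred u hu.1 huA) with h | h
    · exact hu.2 h
    · exact hI.notMem_of_mem_left h (hl.verts_subset_roof hu.1)

section limit

variable {ι : Type*} {f : ι → Wave Ω}

theorem IsSeparating.limit {I : ι → Set Ω} {J : Set Ω} (h : ∀ i, IsSeparating N (I i) (f i))
    (hJ : ∀ i, Disjoint (f i).roof J) (hA : N.source \ J ⊆ ⋃ i, (f i).roof)
    (hR : ∀ i, ∀ x ∈ (f i).interior, ∀ y, N.Arc x y → y ∈ (⋃ j, (f j).roof) ∪ J) :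
    IsSeparating N J (limit f) where
  roof_disjoint := by rwa [limit_roof, Set.disjoint_iUnion_left]
  interior_disjoint_front := Set.disjoint_sdiff_right
  interior_disjoint_sink := Set.disjoint_iUnion_left.2 fun i => (h i).interior_disjoint_sink
  mem_roof_of_source a ha haJ := limit_roof ▸ hA ⟨ha, haJ⟩
  arc_closed x hx y hxy := by
    obtain ⟨i, hi⟩ := Set.mem_iUnion.1 hx
    exact limit_roof ▸ hR i x hi y hxy

theorem IsLinked.limit (h : ∀ i, IsLinked N (f i)) (hf : Directed Extends f) :
    IsLinked N (limit f) := by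
  have hp : ∀ i, ∀ u ∈ (f i).verts, (Wave.limit f).pred u = (f i).pred u := fun i u hu =>
    limit_pred hf i ((h i).verts_subset_roof hu)
  exact
    { pred_mem := by
        intro u hu huA
        obtain ⟨i, hu⟩ := mem_limit_verts.1 hu
        exact hp i u hu ▸ mem_limit_verts.2 ⟨i, (h i).pred_mem u hu huA⟩
      arc_pred := by
        intro u hu huA
        obtain ⟨i, hu⟩ := mem_limit_verts.1 hu
        exact hp i u hu ▸ (h i).arc_pred u hu huA
      pred_injOn := by
        rintro u ⟨hu, huA⟩ v ⟨hv, hvA⟩ huv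
        obtain ⟨i, hu⟩ := mem_limit_verts.1 hu
        obtain ⟨j, hv⟩ := mem_limit_verts.1 hv
        obtain ⟨k, hik, hjk⟩ := hf i j
        replace hu := (hik.mem_verts_iff u ((h i).verts_subset_roof hu)).1 hu
        replace hv := (hjk.mem_verts_iff v ((h j).verts_subset_roof hv)).1 hv
        exact (h k).pred_injOn ⟨hu, huA⟩ ⟨hv, hvA⟩ (by rwa [hp k u hu, hp k v hv] at huv)
      rooted := by
        intro u hu
        obtain ⟨i, hu⟩ := mem_limit_verts.1 hu
        exact ((h i).rooted u hu).transfer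
          (fun v hv hvA => .inl ⟨hp i v hv, (h i).pred_mem v hv hvA⟩) hu
      pred_mem_interior := by
        intro u hu huA
        obtain ⟨i, hu⟩ := mem_limit_verts.1 hu
        exact hp i u hu ▸ Set.mem_iUnion.2 ⟨i, (h i).pred_mem_interior u hu huA⟩
      verts_subset_roof := by
        rw [limit_roof]
        exact Set.iUnion_mono fun i => (h i).verts_subset_roof
      front_subset_verts := Set.sdiff_subset.trans
        (Set.iUnion_mono fun i => (h i).front_subset_verts) }

theorem extends_limit (h : ∀ i, IsLinked N (f i)) (hf : Directed Extends f) (i : ι) :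
    Extends (f i) (limit f) where
  interior_subset := Set.subset_iUnion (fun i => (f i).interior) i
  roof_subset := by rw [limit_roof]; exact Set.subset_iUnion (fun i => (f i).roof) i
  mem_verts_iff x hx := by
    refine ⟨fun hxi => mem_limit_verts.2 ⟨i, hxi⟩, fun hxl => ?_⟩
    obtain ⟨j, hxj⟩ := mem_limit_verts.1 hxl
    obtain ⟨k, hik, hjk⟩ := hf i j
    exact (hik.mem_verts_iff x hx).2
      ((hjk.mem_verts_iff x ((h j).verts_subset_roof hxj)).1 hxj)
  pred_eqOn := limit_pred hf i

theorem IsWave.limit [Nonempty ι] {I : Set Ω} (h : ∀ i, IsWave N I (f i))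
    (hf : Directed Extends f) : IsWave N I (limit f) where
  toIsSeparating := .limit (fun i => (h i).toIsSeparating) (fun i => (h i).roof_disjoint)
    (fun a ha => Set.mem_iUnion.2 ⟨Classical.arbitrary ι, (h _).mem_roof_of_source a ha.1 ha.2⟩)
    fun i x hx y hxy => ((h i).arc_closed x hx y hxy).imp_left fun hy => Set.mem_iUnion.2 ⟨i, hy⟩
  toIsLinked := .limit (fun i => (h i).toIsLinked) hf

end limit

theorem isWave_trivial (N : Web Ω) (I : Set Ω) :
    IsWave N I ⟨∅, N.source \ I, N.source \ I, id⟩ where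
  roof_disjoint := by simpa [roof] using Set.disjoint_sdiff_left
  interior_disjoint_front := Set.empty_disjoint _
  interior_disjoint_sink := Set.empty_disjoint _
  mem_roof_of_source a ha haI := .inr ⟨ha, haI⟩
  arc_closed x hx := hx.elim
  pred_mem u hu huA := absurd hu.1 huA
  arc_pred u hu huA := absurd hu.1 huA
  pred_injOn u hu := absurd hu.1.1 hu.2
  rooted u hu := .base hu.1
  pred_mem_interior u hu huA := absurd hu.1 huA
  verts_subset_roof := Set.subset_union_right
  front_subset_verts := subset_rfl

/-- A greatest wave exists up to its warp: by Zorn's lemma some wave has no proper extension, and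
such a wave absorbs every other one. -/
theorem IsWave.exists_greatest {I : Set Ω} {k : Wave Ω} (hk : IsWave N I k) :
    ∃ m, IsWave N I m ∧ Extends k m ∧
      ∀ v, IsWave N I v → v.interior ⊆ m.interior ∧ v.roof ⊆ m.roof := by
  obtain ⟨⟨m, hm, hkm⟩, hmax⟩ := exists_maximal_of_chains_bounded
    (α := {l : Wave Ω // IsWave N I l ∧ Extends k l}) (r := fun l m => Extends l.1 m.1)
    (fun c hc => by
      rcases c.eq_empty_or_nonempty with rfl | ⟨l, hl⟩
      · exact ⟨⟨k, hk, .refl k⟩, by simp⟩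
      have : Nonempty c := ⟨⟨l, hl⟩⟩
      have hdir : Directed Extends fun l : c => l.1.1 := hc.directed
      have hle := extends_limit (fun l : c => l.1.2.1.toIsLinked) hdir
      exact ⟨⟨_, .limit (fun l : c => l.1.2.1) hdir, l.2.2.trans (hle ⟨l, hl⟩)⟩,
        fun l hl => hle ⟨l, hl⟩⟩)
    Extends.trans
  have habs : ∀ v, IsWave N I v → Extends (m.append v) m := fun v hv =>
    hmax ⟨m.append v, hm.append hv hv.roof_disjoint.symm Set.subset_union_left,
      hkm.trans (m.extends_append v)⟩ (m.extends_append v)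
  refine ⟨m, hm, hkm, fun v hv => ⟨Set.subset_union_right.trans (habs v hv).interior_subset, ?_⟩⟩
  have := (habs v hv).roof_subset
  rw [append_roof] at this
  exact Set.subset_union_right.trans this

end Web

/-! ### Alternating walks -/

namespace Web

open Wave

variable {Ω : Type w} {N : Web Ω}

theorem IsWarp.mono {U V : Set Ω} {p : Ω → Ω} (h : IsWarp N U p)
    (hV : ∀ v ∈ V, v ∉ N.source → v ∈ U ∧ p v ∈ V) : IsWarp N V p where
  pred_mem v hv hvA := (hV v hv hvA).2
  arc_pred v hv hvA := h.arc_pred v (hV v hv hvA).1 hvA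
  pred_injOn := h.pred_injOn.mono fun v hv => And.intro (hV v hv.1 hv.2).1 hv.2
  rooted v hv := by
    by_cases hvA : v ∈ N.source
    · exact .base hvA
    · exact h.rooted v (hV v hv hvA).1

theorem IsWarp.insert_source {U : Set Ω} {p : Ω → Ω} (h : IsWarp N U p) {a : Ω}
    (ha : a ∈ N.source) : IsWarp N (insert a U) p where
  pred_mem := by have := h.pred_mem; grind
  arc_pred := by have := h.arc_pred; grind
  pred_injOn := h.pred_injOn.mono (by grind)
  rooted := by
    rintro v (rfl | hv)
    · exact .base ha
    · exact h.rooted v hv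

section Alternating

open Function (update update_self update_of_ne)

open Classical in
theorem IsWarp.rooted_update {U : Set Ω} {p : Ω → Ω} (h : IsWarp N U p) {u v z : Ω} (hz : z ∉ U)
    (hv : v ∈ U) : Rooted N.source (update p z u) v :=
  (h.rooted v hv).transfer
    (fun _ hw hwA => .inl ⟨update_of_ne (ne_of_mem_of_not_mem hw hz) _ _, h.pred_mem _ hw hwA⟩) hv

open Classical in
/-- If a path of the warp ends in `u`, it can be prolonged along an arc from `u` to `z`; should `z`
lie on the warp, it is cut off from its former predecessor. -/
theorem IsWarp.insert_update {U : Set Ω} {p : Ω → Ω} (h : IsWarp N U p) {u z : Ω} (hu : u ∈ U)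
    (hlast : ∀ v ∈ U, v ∉ N.source → p v ≠ u) (huz : N.Arc u z)
    (hroot : Rooted N.source (update p z u) u) : IsWarp N (insert z U) (update p z u) where
  pred_mem v hv hvA := by
    have := h.pred_mem v
    grind
  arc_pred v hv hvA := by
    have := h.arc_pred v
    grind
  pred_injOn v hv v' hv' := by
    have := @h.pred_injOn v
    grind
  rooted v hv := by
    have hz : Rooted N.source (update p z u) z := .step (by rwa [update_self])
    rcases hv with rfl | hv
    · exact hz
    · refine (h.rooted v hv).transfer (P := U) (fun w hw hwA => ?_) hv
      by_cases hwz : w = z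
      · exact .inr (hwz ▸ hz)
      · exact .inl ⟨update_of_ne hwz _ _, h.pred_mem w hw hwA⟩

/-- Outside `K` the warps `(U, p)` and `(V, q)` have the same vertices and the same arcs, an arc
being attributed to its tail. -/
structure AgreesOff (N : Web Ω) (K U : Set Ω) (p : Ω → Ω) (V : Set Ω) (q : Ω → Ω) : Prop where
  mem_iff : ∀ z ∉ K, (z ∈ U ↔ z ∈ V)
  arc_iff : ∀ z ∉ N.source, ∀ x ∉ K, (z ∈ U ∧ p z = x ↔ z ∈ V ∧ q z = x)

open Classical in
/-- `Alternating N k a U p u`: the warp `(U, p)`, one path of which ends in `u`, results from the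
warp of `k` by adding the trivial path `a` and moving the end of the current path along an
alternating walk inside the interior of `k`. -/
inductive Alternating (N : Web Ω) (k : Wave Ω) (a : Ω) : Set Ω → (Ω → Ω) → Ω → Prop
  | init : Alternating N k a (insert a k.verts) k.pred a
  | prolong {U : Set Ω} {p : Ω → Ω} {u z : Ω} (h : Alternating N k a U p u) (hzU : z ∉ U)
      (huz : N.Arc u z) (hzX : z ∈ k.interior) :
      Alternating N k a (insert z U) (update p z u) z
  | switch {U : Set Ω} {p : Ω → Ω} {u z : Ω} (h : Alternating N k a U p u) (hzU : z ∈ U)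
      (huz : N.Arc u z) (hroot : Rooted N.source (update p z u) u) :
      Alternating N k a U (update p z u) (p z)
  | retract {U : Set Ω} {p : Ω → Ω} {u : Ω} (h : Alternating N k a U p u) (huA : u ∉ N.source) :
      Alternating N k a (U \ {u}) p (p u)

/-- The vertices in which a path can be made to end by alternating moves starting from `a`. -/
def altReach (N : Web Ω) (k : Wave Ω) (a : Ω) : Set Ω := {u | ∃ U p, Alternating N k a U p u}

/-- The properties of `(U, p, u)` preserved by the moves of `Alternating`. -/
structure AlternatingInv (N : Web Ω) (k : Wave Ω) (a : Ω) (U : Set Ω) (p : Ω → Ω) (u : Ω) : Prop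
    extends IsLinked N ⟨k.interior, k.front, U, p⟩, AgreesOff N (altReach N k a) U p k.verts k.pred
    where
  mem : u ∈ U
  mem_interior : u ∈ k.interior
  pred_ne : ∀ v ∈ U, v ∉ N.source → p v ≠ u

section Moves

variable {k : Wave Ω} {a u z : Ω} {U : Set Ω} {p : Ω → Ω}

theorem AlternatingInv.init (hk : IsLinked N k) (ha : a ∈ N.source) (haX : a ∈ k.interior)
    (haU : a ∉ k.verts) : AlternatingInv N k a (insert a k.verts) k.pred a where
  toIsWarp := hk.toIsWarp.insert_source ha
  pred_mem_interior := by have := hk.pred_mem_interior; grind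
  verts_subset_roof := Set.insert_subset (.inl haX) hk.verts_subset_roof
  front_subset_verts := hk.front_subset_verts.trans (Set.subset_insert _ _)
  mem_iff := by
    have : a ∈ altReach N k a := ⟨_, _, .init⟩
    grind
  arc_iff := by grind
  mem := Set.mem_insert _ _
  mem_interior := haX
  pred_ne := by have := hk.pred_mem; grind

open Classical in
theorem AlternatingInv.prolong (hi : AlternatingInv N k a U p u) (h : Alternating N k a U p u)
    (hzU : z ∉ U) (huz : N.Arc u z) (hzX : z ∈ k.interior) :
    AlternatingInv N k a (insert z U) (update p z u) z where
  toIsWarp := hi.toIsWarp.insert_update hi.mem hi.pred_ne huz (hi.rooted_update hzU hi.mem)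
  pred_mem_interior := by
    have := hi.pred_mem_interior
    have := hi.mem_interior
    grind
  verts_subset_roof := Set.insert_subset (.inl hzX) hi.verts_subset_roof
  front_subset_verts := hi.front_subset_verts.trans (Set.subset_insert _ _)
  mem_iff := by
    have : z ∈ altReach N k a := ⟨_, _, h.prolong hzU huz hzX⟩
    have := hi.mem_iff
    grind
  arc_iff := by
    have : u ∈ altReach N k a := ⟨_, _, h⟩
    have := hi.arc_iff
    grind
  mem := Set.mem_insert _ _
  mem_interior := hzX
  pred_ne := by
    have := hi.pred_mem
    have := hi.mem
    grind

open Classical in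
theorem AlternatingInv.switch (hi : AlternatingInv N k a U p u) (h : Alternating N k a U p u)
    (hzU : z ∈ U) (huz : N.Arc u z) (hroot : Rooted N.source (update p z u) u) :
    AlternatingInv N k a U (update p z u) (p z) where
  toIsWarp := by
    simpa only [Set.insert_eq_of_mem hzU] using
      hi.toIsWarp.insert_update hi.mem hi.pred_ne huz hroot
  pred_mem_interior := by
    have := hi.pred_mem_interior
    have := hi.mem_interior
    grind
  verts_subset_roof := hi.verts_subset_roof
  front_subset_verts := hi.front_subset_verts
  mem_iff := hi.mem_iff
  arc_iff := by
    have : u ∈ altReach N k a := ⟨_, _, h⟩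
    have : p z ∈ altReach N k a := ⟨_, _, h.switch hzU huz hroot⟩
    have := hi.arc_iff
    grind
  mem := hi.pred_mem z hzU (N.notMem_source_of_arc huz)
  mem_interior := hi.pred_mem_interior z hzU (N.notMem_source_of_arc huz)
  pred_ne v hv hvA := by
    have hzA := N.notMem_source_of_arc huz
    have := hi.pred_ne z hzU hzA
    have := @hi.pred_injOn v ⟨hv, hvA⟩ z ⟨hzU, hzA⟩
    grind

theorem AlternatingInv.retract (hi : AlternatingInv N k a U p u) (h : Alternating N k a U p u)
    (hk : Disjoint k.interior k.front) (huA : u ∉ N.source) :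
    AlternatingInv N k a (U \ {u}) p (p u) where
  toIsWarp := hi.toIsWarp.mono fun v hv hvA =>
    ⟨hv.1, hi.pred_mem v hv.1 hvA, hi.pred_ne v hv.1 hvA⟩
  pred_mem_interior v hv := hi.pred_mem_interior v hv.1
  verts_subset_roof := Set.sdiff_subset.trans hi.verts_subset_roof
  front_subset_verts v hv :=
    ⟨hi.front_subset_verts hv, fun h => hk.notMem_of_mem_left hi.mem_interior (h ▸ hv)⟩
  mem_iff := by
    have : u ∈ altReach N k a := ⟨_, _, h⟩
    have := hi.mem_iff
    grind
  arc_iff := by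
    have : p u ∈ altReach N k a := ⟨_, _, h.retract huA⟩
    have := hi.arc_iff
    grind
  mem := ⟨hi.pred_mem u hi.mem huA, hi.pred_ne u hi.mem huA⟩
  mem_interior := hi.pred_mem_interior u hi.mem huA
  pred_ne v hv hvA := by
    have := @hi.pred_injOn v ⟨hv.1, hvA⟩ u ⟨hi.mem, huA⟩
    grind

theorem Alternating.inv (h : Alternating N k a U p u) (hk : IsLinked N k)
    (hd : Disjoint k.interior k.front) (ha : a ∈ N.source) (haX : a ∈ k.interior)
    (haU : a ∉ k.verts) : AlternatingInv N k a U p u := by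
  induction h with
  | init => exact .init hk ha haX haU
  | prolong h hzU huz hzX hi => exact hi.prolong h hzU huz hzX
  | switch h hzU huz hroot hi => exact hi.switch h hzU huz hroot
  | retract h huA hi => exact hi.retract h hd huA

open Classical in
theorem Alternating.mem_altReach_or_rooted_update (hu : Rooted N.source p u) (c : Ω)
    (h : Alternating N k a U p u) :
    z ∈ altReach N k a ∨ Rooted N.source (update p z c) u := by
  induction hu generalizing U with
  | base huA => exact .inr (.base huA)
  | @step u _ ih =>
    by_cases huA : u ∈ N.source
    · exact .inr (.base huA)
    by_cases huz : u = z
    · exact .inl (huz ▸ ⟨_, _, h⟩)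
    · exact (ih (h.retract huA)).imp_right fun h => .step (by rwa [update_of_ne huz])

theorem pred_mem_altReach (hi : ∀ {U p u}, Alternating N k a U p u → AlternatingInv N k a U p u)
    (hz : z ∈ altReach N k a) (hzU : z ∈ k.verts) (hzA : z ∉ N.source) :
    k.pred z ∈ altReach N k a := by
  obtain ⟨U, p, h⟩ := hz
  have hpz : p z ∈ altReach N k a := ⟨_, _, h.retract hzA⟩
  have := (hi h).arc_iff z hzA
  grind

end Moves

/-- The part of the warp `(U, p)` running inside `K`, followed as far as the first vertices
outside `K`, in the web `N - I`. -/
def cutWave (N : Web Ω) (I K U : Set Ω) (p : Ω → Ω) : Wave Ω :=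
  let front := {z | z ∉ K ∧ (z ∈ N.source \ I ∨ z ∈ U ∧ z ∉ N.source ∧ p z ∈ K)}
  ⟨K, front, U ∩ K ∪ front, p⟩

theorem isLinked_cutWave {I K U : Set Ω} {p : Ω → Ω} (h : IsWarp N U p)
    (hK : ∀ z ∈ K, z ∈ U → z ∉ N.source → p z ∈ K) : IsLinked N (cutWave N I K U p) where
  toIsWarp := h.mono (by have := h.pred_mem; grind [cutWave])
  pred_mem_interior := by grind [cutWave]
  verts_subset_roof := by grind [cutWave]
  front_subset_verts := Set.subset_union_right

/-- The warp of `k` can be rerouted so as to reach `y` in addition to the front of `k`. -/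
def Reaches (N : Web Ω) (k : Wave Ω) (y : Ω) : Prop :=
  ∃ U p, IsLinked N ⟨k.interior, insert y k.front, U, p⟩

theorem IsLinked.reaches {k : Wave Ω} (hk : IsLinked N k) {u y : Ω} (hu : u ∈ k.verts)
    (huX : u ∈ k.interior) (hlast : ∀ v ∈ k.verts, v ∉ N.source → k.pred v ≠ u)
    (huy : N.Arc u y) (hy : y ∉ k.verts) : Reaches N k y := by
  classical
  refine ⟨insert y k.verts, update k.pred y u,
    { toIsWarp := hk.toIsWarp.insert_update hu hlast huy (hk.rooted_update hy hu)
      pred_mem_interior := ?_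
      verts_subset_roof := ?_
      front_subset_verts := Set.insert_subset_insert hk.front_subset_verts }⟩
  · have := hk.pred_mem_interior
    grind
  · have := hk.verts_subset_roof
    grind

theorem AgreesOff.cutWave_front_eq {K U V : Set Ω} {p q : Ω → Ω} (h : AgreesOff N K U p V q)
    (I : Set Ω) : (cutWave N I K U p).front = (cutWave N I K V q).front := by
  ext z
  have := h.mem_iff z
  have := h.arc_iff z
  grind [cutWave]

theorem isSeparating_cutWave {I : Set Ω} {k : Wave Ω} (hk : IsWave N I k) {a : Ω}
    (hi : ∀ {U p u}, Alternating N k a U p u → AlternatingInv N k a U p u) :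
    IsSeparating N I (cutWave N I (altReach N k a) k.verts k.pred) ∧
      altReach N k a ⊆ k.interior ∧
      (cutWave N I (altReach N k a) k.verts k.pred).roof ⊆ k.roof := by
  set K := altReach N k a
  have hKX : K ⊆ k.interior := fun x ⟨U, p, h⟩ => (hi h).mem_interior
  have hroof : (cutWave N I K k.verts k.pred).roof ⊆ k.roof := by
    have := hk.verts_subset_roof
    have := hk.mem_roof_of_source
    grind [cutWave]
  refine ⟨⟨hk.roof_disjoint.mono_left hroof, ?_, hk.interior_disjoint_sink.mono_left hKX, ?_, ?_⟩,
    hKX, hroof⟩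
  · exact Set.disjoint_left.2 fun x hx h => h.1 hx
  · grind [cutWave]
  · rintro u ⟨U, p, h⟩ z huz
    have hzA := N.notMem_source_of_arc huz
    have hz := hk.arc_closed u (hi h).mem_interior z huz
    suffices z ∉ K → z ∈ k.roof → z ∈ k.verts ∧ k.pred z ∈ K by grind [cutWave]
    intro hzK hzk
    have hzU : z ∈ U := by
      by_contra hzU
      have hzX : z ∈ k.interior := hzk.resolve_right fun h' => hzU ((hi h).front_subset_verts h')
      exact hzK ⟨_, _, h.prolong hzU huz hzX⟩
    have hpz : p z ∈ K := by
      classical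
      have hu := (h.mem_altReach_or_rooted_update ((hi h).rooted u (hi h).mem) u).resolve_left hzK
      exact ⟨_, _, h.switch hzU huz hu⟩
    have := (hi h).mem_iff z hzK
    have := (hi h).arc_iff z hzA
    grind

/-- If a wave misses the source `a`, then cutting its warp along the vertices reachable from `a` by
alternating moves yields a wave all of whose possible exits can be reached. -/
theorem IsWave.exists_reaches {I : Set Ω} {k : Wave Ω} (hk : IsWave N I k) {a : Ω}
    (ha : a ∈ N.source) (haI : a ∉ I) (haU : a ∉ k.verts) :
    ∃ l, IsWave N I l ∧ l.interior ⊆ k.interior ∧ l.roof ⊆ k.roof ∧ a ∈ l.interior ∧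
      a ∉ l.verts ∧ ∀ x ∈ l.interior, ∀ y, N.Arc x y → y ∉ l.roof → Reaches N l y := by
  have haX : a ∈ k.interior := (hk.mem_roof_of_source a ha haI).resolve_right fun h =>
    haU (hk.front_subset_verts h)
  have hi : ∀ {U p u}, Alternating N k a U p u → AlternatingInv N k a U p u := fun h =>
    h.inv hk.toIsLinked hk.interior_disjoint_front ha haX haU
  obtain ⟨hsep, hKX, hroof⟩ := isSeparating_cutWave hk hi
  set K := altReach N k a
  have haK : a ∈ K := ⟨_, _, .init⟩
  have hcl : ∀ z ∈ K, z ∈ k.verts → z ∉ N.source → k.pred z ∈ K := fun z =>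
    pred_mem_altReach hi
  refine ⟨cutWave N I K k.verts k.pred, ⟨hsep, isLinked_cutWave hk.toIsWarp hcl⟩, hKX, hroof,
    haK, by grind [cutWave], ?_⟩
  rintro u ⟨U, p, h⟩ y huy hy
  have hlink : IsLinked N (cutWave N I K U p) :=
    isLinked_cutWave (hi h).toIsWarp fun z hz hzU hzA => by
      have := (hi h).arc_iff z hzA
      grind
  have heq := (hi h).cutWave_front_eq I
  have hyv : y ∉ (cutWave N I K U p).verts := fun hv => by
    rcases hlink.verts_subset_roof hv with hv | hv
    · exact hy (.inl hv)
    · exact hy (.inr (heq ▸ hv))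
  have hlast : ∀ v ∈ (cutWave N I K U p).verts, v ∉ N.source → p v ≠ u := fun v hv hvA =>
    (hi h).pred_ne v (by grind [cutWave]) hvA
  obtain ⟨V, q, hV⟩ := hlink.reaches (.inl ⟨(hi h).mem, ⟨_, _, h⟩⟩) ⟨_, _, h⟩ hlast huy hyv
  exact ⟨V, q, heq ▸ hV⟩

end Alternating

end Web

/-! ### Deleting and restoring vertices -/

namespace Web

open Wave

variable {Ω : Type w} {N : Web Ω} {I : Set Ω} {k : Wave Ω}

theorem IsSeparating.insert_front {y : Ω} (hk : IsSeparating N (insert y I) k) (hy : y ∉ I)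
    (U : Set Ω) (p : Ω → Ω) : IsSeparating N I ⟨k.interior, insert y k.front, U, p⟩ := by
  exact
    { roof_disjoint := by
        have := Set.disjoint_left.1 hk.roof_disjoint
        exact Set.disjoint_left.2 (by grind)
      interior_disjoint_front := by
        have := Set.disjoint_left.1 hk.roof_disjoint
        have := Set.disjoint_left.1 hk.interior_disjoint_front
        exact Set.disjoint_left.2 (by grind)
      interior_disjoint_sink := hk.interior_disjoint_sink
      mem_roof_of_source := by
        have := hk.mem_roof_of_source
        grind
      arc_closed := by
        have := hk.arc_closed
        grind }

theorem IsSeparating.of_insert {y : Ω} (hk : IsSeparating N (insert y I) k) (hyA : y ∉ N.source)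
    (hy : ∀ x ∈ k.interior, ¬ N.Arc x y) : IsSeparating N I k where
  roof_disjoint := hk.roof_disjoint.mono_right (Set.subset_insert _ _)
  interior_disjoint_front := hk.interior_disjoint_front
  interior_disjoint_sink := hk.interior_disjoint_sink
  mem_roof_of_source := by
    have := hk.mem_roof_of_source
    grind
  arc_closed := by
    have := hk.arc_closed
    grind

theorem IsWave.fill {G : Set Ω} (hk : IsWave N (I ∪ G) k) (hI : Disjoint G I)
    (hsink : Disjoint G N.sink) (hG : ∀ g ∈ G, ∀ z, N.Arc g z → z ∈ k.roof ∪ (I ∪ G)) :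
    IsWave N I ⟨k.interior ∪ G, k.front, k.verts, k.pred⟩ where
  roof_disjoint := by
    refine Set.disjoint_left.2 ?_
    rintro x ((hx | hx) | hx) hxI
    · exact hk.roof_disjoint.notMem_of_mem_left (.inl hx) (.inl hxI)
    · exact hI.notMem_of_mem_left hx hxI
    · exact hk.roof_disjoint.notMem_of_mem_left (.inr hx) (.inl hxI)
  interior_disjoint_front := Set.disjoint_union_left.2 ⟨hk.interior_disjoint_front,
    (hk.roof_disjoint.mono Set.subset_union_right Set.subset_union_right).symm⟩
  interior_disjoint_sink := Set.disjoint_union_left.2 ⟨hk.interior_disjoint_sink, hsink⟩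
  mem_roof_of_source := by
    have := hk.mem_roof_of_source
    grind
  arc_closed := by
    have := hk.arc_closed
    grind
  toIsWarp := hk.toIsWarp
  pred_mem_interior u hu huA := .inl (hk.pred_mem_interior u hu huA)
  verts_subset_roof u hu := (hk.verts_subset_roof hu).imp_left .inl
  front_subset_verts := hk.front_subset_verts

theorem Wave.extends_fill (k : Wave Ω) (G : Set Ω) :
    Extends k ⟨k.interior ∪ G, k.front, k.verts, k.pred⟩ where
  interior_subset := Set.subset_union_left
  roof_subset := Set.union_subset_union_left _ Set.subset_union_left
  mem_verts_iff _ _ := Iff.rfl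
  pred_eqOn _ _ := rfl

theorem Unhindered.exists_mem_front (hI : Unhindered N I) {y a : Ω} (hyA : y ∉ N.source)
    (hyI : y ∉ I) (hk : IsWave N (insert y I) k) (ha : a ∈ N.source) (haI : a ∉ I)
    (hak : a ∉ k.verts) :
    ∃ m, IsWave N I m ∧ m.interior ⊆ k.interior ∧ m.roof ⊆ insert y k.roof ∧ y ∈ m.front := by
  obtain ⟨l, hl, hlX, hlr, -, hal, hreach⟩ := hk.exists_reaches ha (by grind) hak
  by_cases h : ∃ x ∈ l.interior, N.Arc x y
  · obtain ⟨x, hx, hxy⟩ := h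
    have hyl := hl.roof_disjoint.notMem_of_mem_right (Set.mem_insert y I)
    obtain ⟨U, p, hlink⟩ := hreach x hx y hxy hyl
    exact ⟨_, ⟨hl.toIsSeparating.insert_front hyI U p, hlink⟩, hlX, by grind, .inl rfl⟩
  · push Not at h
    exact absurd (hI l ⟨hl.toIsSeparating.of_insert hyA h, hl.toIsLinked⟩ ⟨ha, haI⟩) hal

theorem Unhindered.insert_of_notMem_front {x : Ω} (hI : Unhindered N I) (hxA : x ∉ N.source)
    (hxI : x ∉ I)
    (hx : ∀ k, IsWave N I k → x ∉ k.front) : Unhindered N (insert x I) := by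
  rintro k hk a ⟨ha, haI⟩
  by_contra hak
  obtain ⟨m, hm, -, -, hxm⟩ := hI.exists_mem_front hxA hxI hk ha (by grind) hak
  exact hx m hm hxm

theorem Unhindered.insert_source {a : Ω} (hI : Unhindered N I) (ha : a ∈ N.source) :
    Unhindered N (insert a I) := by
  by_cases haI : a ∈ I
  · rwa [Set.insert_eq_of_mem haI]
  rintro k hk b ⟨hb, hbI⟩
  have hl : IsWave N I ⟨k.interior, insert a k.front, insert a k.verts, k.pred⟩ :=
    { toIsSeparating := hk.toIsSeparating.insert_front haI _ _
      toIsWarp := hk.toIsWarp.insert_source ha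
      pred_mem_interior := by have := hk.pred_mem_interior; grind
      verts_subset_roof := by have := hk.verts_subset_roof; grind
      front_subset_verts := Set.insert_subset_insert hk.front_subset_verts }
  exact (hI _ hl ⟨hb, fun h => hbI (.inr h)⟩).resolve_left fun h => hbI (.inl h)

section OnPath

/-- `OnPath A pred x v`: the vertex `x` lies on the path obtained by following `pred` from `v` back
to `A`. -/
def OnPath (A : Set Ω) (pred : Ω → Ω) : Ω → Ω → Prop :=
  Relation.ReflTransGen fun x v => v ∉ A ∧ pred v = x

theorem Rooted.exists_onPath {A : Set Ω} {p : Ω → Ω} {v : Ω} (h : Rooted A p v) :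
    ∃ a ∈ A, OnPath A p a v := by
  induction h with
  | base ha => exact ⟨_, ha, .refl⟩
  | @step u _ ih =>
    by_cases hu : u ∈ A
    · exact ⟨u, hu, .refl⟩
    · obtain ⟨a, ha, h⟩ := ih
      exact ⟨a, ha, h.tail ⟨hu, rfl⟩⟩

theorem IsWarp.mem_of_onPath {U : Set Ω} {p : Ω → Ω} (hU : IsWarp N U p) {x v : Ω}
    (h : OnPath N.source p x v) (hv : v ∈ U) : x ∈ U := by
  induction h with
  | refl => exact hv
  | tail _ hr ih => exact ih (hr.2 ▸ hU.pred_mem _ hv hr.1)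

theorem IsWarp.onPath_of_onPath {U : Set Ω} {p : Ω → Ω} (hU : IsWarp N U p) {x u v : Ω}
    (hu : OnPath N.source p x u) (huU : u ∈ U) (hv : OnPath N.source p x v) (hvU : v ∈ U) :
    OnPath N.source p u v ∨ OnPath N.source p v u := by
  induction hu with
  | refl => exact .inl hv
  | @tail b c _ hr ih =>
    obtain ⟨hcA, rfl⟩ := hr
    rcases ih (hU.pred_mem c huU hcA) with h | h
    · rcases h.cases_head with rfl | ⟨d, ⟨hdA, hd⟩, hdv⟩
      · exact .inr (.single ⟨hcA, rfl⟩)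
      · rw [hU.pred_injOn ⟨huU, hcA⟩ ⟨hU.mem_of_onPath hdv hvU, hdA⟩ hd.symm]
        exact .inl hdv
    · exact .inr (h.tail ⟨hcA, rfl⟩)

theorem IsLinked.eq_or_mem_interior_of_onPath (hk : IsLinked N k) {x v : Ω}
    (h : OnPath N.source k.pred x v) (hv : v ∈ k.verts) : x = v ∨ x ∈ k.interior := by
  rcases h.cases_head with h | ⟨y, ⟨hyA, rfl⟩, hyv⟩
  · exact .inl h
  · exact .inr (hk.pred_mem_interior y (hk.mem_of_onPath hyv hv) hyA)

theorem IsWave.eq_of_onPath_front (hk : IsWave N I k) {q q' : Ω} (hq : q ∈ k.front)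
    (hq' : q' ∈ k.front) (h : OnPath N.source k.pred q q') : q = q' :=
  (hk.eq_or_mem_interior_of_onPath h (hk.front_subset_verts hq')).resolve_right fun hX =>
    hk.interior_disjoint_front.notMem_of_mem_left hX hq

theorem IsWave.front_eq_of_onPath (hk : IsWave N I k) {x q q' : Ω} (hq : q ∈ k.front)
    (hq' : q' ∈ k.front) (h : OnPath N.source k.pred x q) (h' : OnPath N.source k.pred x q') :
    q = q' :=
  (hk.onPath_of_onPath h (hk.front_subset_verts hq) h' (hk.front_subset_verts hq')).elim
    (hk.eq_of_onPath_front hq hq') fun h => (hk.eq_of_onPath_front hq' hq h).symm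

/-- Deleting `C` from a wave and dropping all paths which do not lead to its remaining front. -/
def Wave.trim (N : Web Ω) (k : Wave Ω) (C : Set Ω) : Wave Ω :=
  ⟨k.interior \ C, k.front \ C, {u | ∃ q ∈ k.front \ C, OnPath N.source k.pred u q}, k.pred⟩

theorem IsWave.trim (hk : IsWave N I k) {C : Set Ω}
    (hC : ∀ c ∈ C, ∀ q ∈ k.front, OnPath N.source k.pred c q → q ∈ C) :
    IsWave N (I ∪ C) (k.trim N C) where
  roof_disjoint := by
    have := Set.disjoint_left.1 hk.roof_disjoint
    exact Set.disjoint_left.2 (by grind [Wave.trim])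
  interior_disjoint_front :=
    hk.interior_disjoint_front.mono Set.sdiff_subset Set.sdiff_subset
  interior_disjoint_sink := hk.interior_disjoint_sink.mono_left Set.sdiff_subset
  mem_roof_of_source := by
    have := hk.mem_roof_of_source
    grind [Wave.trim]
  arc_closed := by
    have := hk.arc_closed
    grind [Wave.trim]
  toIsWarp := hk.toIsWarp.mono fun v ⟨q, hq, hvq⟩ hvA =>
    ⟨hk.mem_of_onPath hvq (hk.front_subset_verts hq.1), q, hq, hvq.head ⟨hvA, rfl⟩⟩
  pred_mem_interior v := fun ⟨q, hq, hvq⟩ hvA =>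
    ⟨hk.pred_mem_interior v (hk.mem_of_onPath hvq (hk.front_subset_verts hq.1)) hvA,
      fun h => hq.2 (hC _ h q hq.1 (hvq.head ⟨hvA, rfl⟩))⟩
  verts_subset_roof := by
    rintro v ⟨q, hq, hvq⟩
    rcases hk.eq_or_mem_interior_of_onPath hvq (hk.front_subset_verts hq.1) with rfl | hv
    · exact .inr hq
    · exact .inl ⟨hv, fun h => hq.2 (hC v h q hq.1 hvq)⟩
  front_subset_verts q hq := ⟨q, hq, .refl⟩

end OnPath

theorem IsWave.trim_pair (hk : IsWave N I k) {c q : Ω} (hq : q ∈ k.front)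
    (hcq : OnPath N.source k.pred c q) :
    IsWave N (insert q (insert c I)) (k.trim N {c, q}) := by
  rw [show insert q (insert c I) = I ∪ {c, q} by grind]
  refine hk.trim fun x hx q' hq' hxq' => .inr ?_
  rcases hx with rfl | rfl
  · exact (hk.front_eq_of_onPath hq hq' hcq hxq').symm
  · exact (hk.eq_of_onPath_front hq hq' hxq').symm

/-- Deleting a vertex of a path of the wave ending in `q` leaves the source of that path uncovered,
so the rest of the wave can be rerouted to `q`. -/
theorem IsWave.delete_of_onPath (hk : IsWave N I k) {c q : Ω} (hcA : c ∉ N.source)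
    (hun : Unhindered N (insert c I)) (hq : q ∈ k.front) (hcq : OnPath N.source k.pred c q) :
    c ∉ k.front ∧ ∃ l, IsWave N (insert c I) l ∧ l.interior = k.interior \ {c} ∧
      l.front = k.front := by
  have hqA : q ∉ N.source := by
    rcases hcq.cases_tail with rfl | ⟨b, -, hqA, -⟩
    exacts [hcA, hqA]
  have hqU := hk.front_subset_verts hq
  obtain ⟨a, ha, haq⟩ := (hk.rooted q hqU).exists_onPath
  have haI : a ∉ insert c I := by
    have := hk.roof_disjoint.notMem_of_mem_left
      (hk.verts_subset_roof (hk.mem_of_onPath haq hqU))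
    grind
  have hk' := hk.trim_pair hq hcq
  have hak : a ∉ (k.trim N {c, q}).verts := by
    rintro ⟨q', hq', haq'⟩
    exact hq'.2 (.inr (hk.front_eq_of_onPath hq'.1 hq haq' haq))
  have hcq' : c ≠ q := by
    rintro rfl
    rw [Set.insert_eq_of_mem (Set.mem_insert c I)] at hk'
    exact hak (hun _ hk' ⟨ha, haI⟩)
  have hqX := hk.interior_disjoint_front.notMem_of_mem_right hq
  have hcS : c ∉ k.front := fun h => hcq' (hk.eq_of_onPath_front h hq hcq)
  have hqI : q ∉ insert c I := by
    have := hk.roof_disjoint.notMem_of_mem_left (.inr hq)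
    grind
  obtain ⟨m, hm, hmX, hmr, hqm⟩ := hun.exists_mem_front hqA hqI hk' ha haI hak
  have hd := Set.disjoint_left.1 hk.interior_disjoint_front
  have := Set.disjoint_left.1 hm.interior_disjoint_front
  refine ⟨hcS, m.append (k.trim N {c, q}), hm.append hk' ?_ (by grind), ?_, ?_⟩
  · exact hk'.roof_disjoint.symm.mono_left (Set.subset_insert _ _)
  · rw [append_interior, Set.union_eq_self_of_subset_left hmX]
    ext x
    grind [Wave.trim]
  · ext x
    have := @hmX x
    have := @hmr x
    grind [Wave.trim]

theorem IsWave.delete (hk : IsWave N I k) {c : Ω} (hcA : c ∉ N.source)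
    (hun : Unhindered N (insert c I)) :
    c ∉ k.front ∧ ∃ l, IsWave N (insert c I) l ∧ l.interior = k.interior \ {c} ∧
      l.front = k.front := by
  by_cases h : ∃ q ∈ k.front, OnPath N.source k.pred c q
  · obtain ⟨q, hq, hcq⟩ := h
    exact hk.delete_of_onPath hcA hun hq hcq
  · push Not at h
    have hcS : c ∉ k.front := fun hc => h c hc .refl
    refine ⟨hcS, k.trim N {c}, ?_, rfl, Set.sdiff_singleton_eq_self hcS⟩
    rw [← Set.union_singleton]
    exact hk.trim fun x hx q hq hxq => absurd (hx ▸ hxq) (h q hq)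

theorem IsWave.delete_finite (hk : IsWave N I k) {C : Set Ω} (hC : C.Finite)
    (hCA : Disjoint C N.source) (hun : ∀ D ⊆ C, Unhindered N (I ∪ D)) :
    Disjoint C k.front ∧ ∃ l, IsWave N (I ∪ C) l ∧ l.interior = k.interior \ C ∧
      l.front = k.front := by
  induction C, hC using Set.Finite.induction_on with
  | empty => exact ⟨Set.empty_disjoint _, k, by simpa using hk, by simp, rfl⟩
  | @insert c C _ _ ih =>
    rw [Set.disjoint_insert_left] at hCA
    obtain ⟨hCS, l, hl, hlX, hlS⟩ := ih hCA.2 fun D hD => hun D (hD.trans (Set.subset_insert _ _))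
    obtain ⟨hcS, m, hm, hmX, hmS⟩ := hl.delete hCA.1
      (by rw [← Set.union_insert]; exact hun _ subset_rfl)
    refine ⟨Set.disjoint_insert_left.2 ⟨hlS ▸ hcS, hCS⟩, m, by rwa [Set.union_insert], ?_,
      hmS.trans hlS⟩
    rw [hmX, hlX, Set.sdiff_sdiff, Set.union_singleton]

theorem IsWave.exists_mem_interior {l : Wave Ω} {e : Ω} {U : Set Ω} (hk : IsWave N (I ∪ U) k)
    (he : e ∈ k.roof) (hl : IsWave N (insert e I) l) (hUl : U ⊆ l.roof) (hU : U.Finite)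
    (hA : Disjoint (insert e U) N.source) (hun : ∀ D ⊆ insert e U, Unhindered N (I ∪ D)) :
    ∃ m, IsWave N I m ∧ e ∈ m.interior := by
  have hkI := Set.disjoint_left.1 hk.roof_disjoint
  have hlI := Set.disjoint_left.1 hl.roof_disjoint
  rw [Set.disjoint_insert_left] at hA
  obtain ⟨hek, k', hk', hkX, hkS⟩ := hk.delete hA.1
    (by rw [← Set.union_insert]; exact hun _ subset_rfl)
  obtain ⟨hUl', l', hl', hlX, hlS⟩ := hl.delete_finite hU hA.2 fun D hD => by
    rw [Set.insert_union, ← Set.union_insert]; exact hun _ (Set.insert_subset_insert hD)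
  rw [Set.insert_union] at hl'
  have heX : e ∈ k.interior := he.resolve_right hek
  have hUX : ∀ u ∈ U, u ∈ l.interior := fun u hu =>
    (hUl hu).resolve_right (hUl'.notMem_of_mem_left hu)
  have hV := hk'.append hl' hl'.roof_disjoint.symm Set.subset_union_left
  rw [← Set.union_insert] at hV
  refine ⟨_, hV.fill ?_ ?_ ?_, .inr (.inl rfl)⟩
  · exact Set.disjoint_left.2 (by grind)
  · have := Set.disjoint_left.1 hk.interior_disjoint_sink
    have := Set.disjoint_left.1 hl.interior_disjoint_sink
    exact Set.disjoint_left.2 (by grind)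
  · rintro g (rfl | hg) z hz
    · have := hk.arc_closed _ heX z hz
      grind
    · have := hl.arc_closed _ (hUX g hg) z hz
      grind

end Web

/-! ### Crossings -/

namespace Web

open Wave

variable {Ω : Type w} {N : Web Ω} {I : Set Ω} {k : Wave Ω}

theorem IsWave.mono {J : Set Ω} (hk : IsWave N I k) (hIJ : I ⊆ J) (hJ : Disjoint k.roof J) :
    IsWave N J k where
  roof_disjoint := hJ
  interior_disjoint_front := hk.interior_disjoint_front
  interior_disjoint_sink := hk.interior_disjoint_sink
  mem_roof_of_source a ha haJ := hk.mem_roof_of_source a ha fun h => haJ (hIJ h)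
  arc_closed x hx y hxy := (hk.arc_closed x hx y hxy).imp_right fun h => hIJ h
  toIsLinked := hk.toIsLinked

/-- The roof of the web `N - I`: the vertices in the roof of some wave. -/
def webRoof (N : Web Ω) (I : Set Ω) : Set Ω := {y | ∃ k, IsWave N I k ∧ y ∈ k.roof}

/-- A set `T` any finite part of which can be deleted from `N - I` without creating a hindrance. -/
structure Deletable (N : Web Ω) (I T : Set Ω) : Prop where
  disjoint_source : Disjoint T N.source
  disjoint : Disjoint T I
  unhindered : ∀ F ⊆ T, F.Finite → Unhindered N (I ∪ F)

/-- The vertices of `T` which enter the roof upon deletion of no finite subset of `T`. -/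
def core (N : Web Ω) (I T : Set Ω) : Set Ω :=
  {c ∈ T | ∀ F ⊆ T, F.Finite → c ∉ F → c ∉ webRoof N (I ∪ F)}

namespace Deletable

variable {T F : Set Ω}

theorem webRoof_mono (hT : Deletable N I T) {F' : Set Ω} (hFF' : F ⊆ F') (hF' : F' ⊆ T)
    (hfin : F'.Finite) {y : Ω} (hy : y ∈ webRoof N (I ∪ F)) (hyF' : y ∉ F') :
    y ∈ webRoof N (I ∪ F') := by
  obtain ⟨k, hk, hyk⟩ := hy
  have hC : F' \ F ⊆ F' := Set.sdiff_subset
  obtain ⟨-, l, hl, hlX, hlS⟩ := hk.delete_finite (hfin.subset hC)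
    (hT.disjoint_source.mono_left (hC.trans hF')) fun D hD => by
      have hFD : F ∪ D ⊆ F' := Set.union_subset hFF' (hD.trans hC)
      rw [Set.union_assoc]
      exact hT.unhindered _ (hFD.trans hF') (hfin.subset hFD)
  rw [Set.union_assoc, Set.union_sdiff_cancel hFF'] at hl
  exact ⟨l, hl, by grind⟩

theorem exists_mem_interior (hT : Deletable N I T) (hF : F ⊆ T) (hfin : F.Finite)
    (hk : IsWave N (I ∪ F) k) {e : Ω} (he : e ∈ F) (heC : e ∉ core N I T) :
    ∃ F' ⊆ T, F'.Finite ∧ F \ {e} ⊆ F' ∧ e ∉ F' ∧ Disjoint k.roof F' ∧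
      ∃ v, IsWave N (I ∪ F') v ∧ e ∈ v.interior := by
  obtain ⟨G, hG, hGfin, heG, heR⟩ : ∃ G ⊆ T, G.Finite ∧ e ∉ G ∧ e ∈ webRoof N (I ∪ G) := by
    by_contra! h
    exact heC ⟨hF he, h⟩
  have hkI := Set.disjoint_left.1 hk.roof_disjoint
  set F' : Set Ω := F \ {e} ∪ G \ k.roof
  have hF'T : F' ⊆ T := by grind
  have hF'fin : F'.Finite := (hfin.subset Set.sdiff_subset).union (hGfin.subset Set.sdiff_subset)
  have heF' : e ∉ F' := by grind
  have hkF' : Disjoint k.roof F' := Set.disjoint_left.2 (by grind)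
  have hU : G \ F' ⊆ k.roof := by grind
  have hUe : insert e (G \ F') ⊆ T := by grind
  have hUfin : (G \ F').Finite := hGfin.subset Set.sdiff_subset
  obtain ⟨l, hl, hel⟩ : e ∈ webRoof N (I ∪ (F' ∪ G \ F')) :=
    hT.webRoof_mono (F := G) (by grind) (by grind) (hF'fin.union hUfin) heR (by grind)
  refine ⟨F', hF'T, hF'fin, Set.subset_union_left, heF', hkF', ?_⟩
  rw [← Set.union_assoc] at hl
  refine hl.exists_mem_interior hel (hk.mono (by grind) (Set.disjoint_left.2 (by grind))) hU hUfin
    (hT.disjoint_source.mono_left hUe) fun D hD => ?_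
  rw [Set.union_assoc]
  exact hT.unhindered _ (by grind) (hF'fin.union ((hUfin.insert e).subset hD))

theorem exists_extends_mem_interior (hT : Deletable N I T) (hTB : Disjoint T N.sink) (hF : F ⊆ T)
    (hfin : F.Finite) (hk : IsWave N (I ∪ F) k) {e : Ω} (he : e ∈ F) (heC : e ∉ core N I T) :
    ∃ F' ⊆ T, F'.Finite ∧ F \ {e} ⊆ F' ∧
      ∃ l, IsWave N (I ∪ F') l ∧ Extends k l ∧ e ∈ l.interior := by
  obtain ⟨F', hF', hfin', hFF', heF', hkF', v, hv, hev⟩ :=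
    hT.exists_mem_interior hF hfin hk he heC
  have heT : e ∈ T := hF he
  have heI : e ∉ I := hT.disjoint.notMem_of_mem_left heT
  have hkI := Set.disjoint_left.1 hk.roof_disjoint
  have hke : IsWave N (insert e (I ∪ F')) k := by
    refine hk.mono (by grind) (Set.disjoint_left.2 ?_)
    have := Set.disjoint_left.1 hkF'
    grind
  obtain ⟨m, hm, hkm, hmax⟩ := hke.exists_greatest
  obtain ⟨-, l, hl, hlX, hlS⟩ := hv.delete (hT.disjoint_source.notMem_of_mem_left heT) (by
    rw [← Set.union_insert]
    exact hT.unhindered _ (Set.insert_subset heT hF') (hfin'.insert e))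
  have hlm := (hmax l hl).2
  rw [← Set.union_singleton] at hm
  refine ⟨F', hF', hfin', hFF', _, hm.fill ?_ ?_ ?_, hkm.trans (extends_fill m {e}), .inr rfl⟩
  · simp [heI, heF']
  · simpa using hTB.notMem_of_mem_left heT
  · rintro g rfl z hz
    have := hv.arc_closed g hev z hz
    have := @hlm z
    grind

theorem exists_extends (hT : Deletable N I T) (hTB : Disjoint T N.sink) (hF : F ⊆ T)
    (hfin : F.Finite) (hk : IsWave N (I ∪ F) k) :
    ∃ F' ⊆ T, F'.Finite ∧ ∃ l, IsWave N (I ∪ F') l ∧ Extends k l ∧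
      F ⊆ core N I T ∪ l.interior := by
  suffices H : ∀ D ⊆ F, ∃ F' ⊆ T, F'.Finite ∧ ∃ l, IsWave N (I ∪ F') l ∧ Extends k l ∧
      D ⊆ core N I T ∪ l.interior ∧ F ⊆ F' ∪ l.interior by
    obtain ⟨F', hF', hfin', l, hl, hkl, hD, -⟩ := H F subset_rfl
    exact ⟨F', hF', hfin', l, hl, hkl, hD⟩
  intro D hD
  induction D, hfin.subset hD using Set.Finite.induction_on with
  | empty =>
    exact ⟨F, hF, hfin, k, hk, .refl k, Set.empty_subset _, Set.subset_union_left⟩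
  | @insert e D _ _ ih =>
    obtain ⟨heF, hDF⟩ := Set.insert_subset_iff.1 hD
    obtain ⟨F', hF', hfin', l, hl, hkl, hDl, hFl⟩ := ih hDF
    by_cases he : e ∈ core N I T ∪ l.interior
    · exact ⟨F', hF', hfin', l, hl, hkl, Set.insert_subset he hDl, hFl⟩
    obtain ⟨F₂, hF₂, hfin₂, hFF₂, m, hm, hlm, hem⟩ :=
      hT.exists_extends_mem_interior hTB hF' hfin' hl (e := e) (by grind) (by grind)
    have := hlm.interior_subset
    exact ⟨F₂, hF₂, hfin₂, m, hm, hkl.trans hlm, by grind, by grind⟩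

theorem exists_isWave_core (hT : Deletable N I T) (hTB : Disjoint T N.sink) (hF : F ⊆ T)
    (hfin : F.Finite) (hk : IsWave N (I ∪ F) k) :
    ∃ l, IsWave N (I ∪ core N I T) l ∧ k.roof ⊆ l.roof ∧ F ⊆ core N I T ∪ l.roof := by
  let Stage := {p : Set Ω × Wave Ω // p.1 ⊆ T ∧ p.1.Finite ∧ IsWave N (I ∪ p.1) p.2}
  have hnext : ∀ p : Stage, ∃ q : Stage, Extends p.1.2 q.1.2 ∧
      p.1.1 ⊆ core N I T ∪ q.1.2.interior := by
    rintro ⟨⟨F, v⟩, hF, hfin, hv⟩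
    obtain ⟨F', hF', hfin', v', hv', hvv', hFv'⟩ := hT.exists_extends hTB hF hfin hv
    exact ⟨⟨(F', v'), hF', hfin', hv'⟩, hvv', hFv'⟩
  choose next hext hcore using hnext
  let st : ℕ → Stage := fun n => next^[n] ⟨(F, k), hF, hfin, hk⟩
  let f : ℕ → Wave Ω := fun n => (st n).1.2
  have hsucc : ∀ n, st (n + 1) = next (st n) := fun n => Function.iterate_succ_apply' _ _ _
  have hf : ∀ n, IsWave N (I ∪ (st n).1.1) (f n) := fun n => (st n).2.2.2
  have hdir : Directed Extends f := directed_of_isDirected_le fun i j hij => by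
    induction j, hij using Nat.le_induction with
    | base => exact .refl _
    | succ j _ ih => exact ih.trans (by simpa only [f, hsucc] using hext (st j))
  have hcore' : ∀ n, (st n).1.1 ⊆ core N I T ∪ ⋃ j, (f j).roof := fun n x hx => by
    refine (hcore (st n) hx).imp_right fun h => Set.mem_iUnion.2 ⟨n + 1, .inl ?_⟩
    simpa only [f, hsucc] using h
  refine ⟨limit f, ⟨.limit (fun n => (hf n).toIsSeparating) (fun n => ?_) (fun a ha => ?_)
      (fun n x hx z hz => ?_), .limit (fun n => (hf n).toIsLinked) hdir⟩, ?_, ?_⟩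
  · refine Set.disjoint_left.2 fun x hx hxJ => ?_
    have hxn := (hf n).roof_disjoint.notMem_of_mem_left hx
    exact hxJ.elim (fun h => hxn (.inl h)) fun h =>
      h.2 _ (st n).2.1 (st n).2.2.1 (fun h => hxn (.inr h)) ⟨_, hf n, hx⟩
  · refine Set.mem_iUnion.2 ⟨0, (hf 0).mem_roof_of_source a ha.1 ?_⟩
    rintro (h | h)
    · exact ha.2 (.inl h)
    · exact hT.disjoint_source.notMem_of_mem_left (hF h) ha.1
  · have := (hf n).arc_closed x hx z hz
    have := @hcore' n z
    have : z ∈ (f n).roof → z ∈ ⋃ j, (f j).roof := fun h => Set.mem_iUnion.2 ⟨n, h⟩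
    grind
  · rw [limit_roof]
    exact Set.subset_iUnion (fun n => (f n).roof) 0
  · rw [limit_roof]
    exact hcore' 0

theorem mem_core_or_mem_webRoof (hT : Deletable N I T) (hTB : Disjoint T N.sink) (hF : F ⊆ T)
    (hfin : F.Finite) {y : Ω} (hy : y ∈ F ∪ webRoof N (I ∪ F)) :
    y ∈ core N I T ∪ webRoof N (I ∪ core N I T) := by
  rcases hy with hy | ⟨k, hk, hy⟩
  · obtain ⟨l, hl, -, hFl⟩ := hT.exists_isWave_core hTB hF hfin (isWave_trivial N _)
    exact (hFl hy).imp_right fun h => ⟨l, hl, h⟩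
  · obtain ⟨l, hl, hkl, -⟩ := hT.exists_isWave_core hTB hF hfin hk
    exact .inr ⟨l, hl, hkl hy⟩

theorem sUnion {c : Set (Set Ω)} (hc : ∀ T ∈ c, Deletable N I T) (hdir : DirectedOn (· ⊆ ·) c)
    (hne : c.Nonempty) : Deletable N I (⋃₀ c) where
  disjoint_source := Set.disjoint_sUnion_left.2 fun T hT => (hc T hT).disjoint_source
  disjoint := Set.disjoint_sUnion_left.2 fun T hT => (hc T hT).disjoint
  unhindered F hF hfin := by
    obtain ⟨T, hT, hFT⟩ := hdir.exists_mem_subset_of_finite_of_subset_sUnion hne hfin hF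
    exact (hc T hT).unhindered F hFT hfin

theorem insert (hT : Deletable N I T) {y : Ω} (hyA : y ∉ N.source) (hyI : y ∉ I)
    (hy : ∀ F ⊆ T, F.Finite → y ∉ webRoof N (I ∪ F)) : Deletable N I (insert y T) where
  disjoint_source := Set.disjoint_insert_left.2 ⟨hyA, hT.disjoint_source⟩
  disjoint := Set.disjoint_insert_left.2 ⟨hyI, hT.disjoint⟩
  unhindered F hF hfin := by
    have hF' : F \ {y} ⊆ T := Set.sdiff_singleton_subset_iff.2 hF
    have hfin' : (F \ {y}).Finite := hfin.subset Set.sdiff_subset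
    by_cases hyF : y ∈ F
    · rw [← Set.insert_sdiff_self_of_mem hyF, Set.union_insert]
      exact (hT.unhindered _ hF' hfin').insert_of_notMem_front hyA
        (fun h => h.elim hyI fun h => h.2 rfl) fun k hk hyk => hy _ hF' hfin' ⟨k, hk, .inr hyk⟩
    · rw [← Set.sdiff_singleton_eq_self hyF]
      exact hT.unhindered _ hF' hfin'

end Deletable

/-- `ReachIn N S a x`: some path from `a` to `x` has all its vertices except `a` in `S`. -/
def ReachIn (N : Web Ω) (S : Set Ω) : Ω → Ω → Prop :=
  Relation.ReflTransGen fun x y => N.Arc x y ∧ y ∈ S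

theorem ReachIn.mono {S T : Set Ω} (hST : S ⊆ T) {a x : Ω} (h : ReachIn N S a x) :
    ReachIn N T a x :=
  Relation.ReflTransGen.mono (fun _ _ => And.imp_right fun hy => hST hy) _ _ h

theorem ReachIn.exists_finite {S : Set Ω} {a x : Ω} (h : ReachIn N S a x) :
    ∃ D ⊆ S, D.Finite ∧ ReachIn N D a x := by
  induction h with
  | refl => exact ⟨∅, Set.empty_subset _, Set.finite_empty, .refl⟩
  | @tail x y _ hxy ih =>
    obtain ⟨D, hDS, hD, h⟩ := ih
    exact ⟨insert y D, Set.insert_subset hxy.2 hDS, hD.insert y,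
      (h.mono (Set.subset_insert y D)).tail ⟨hxy.1, .inl rfl⟩⟩

theorem exists_maximal_deletable (hI : Unhindered N I) (a : Ω) :
    ∃ T, Deletable N I T ∧ (∀ x ∈ T, ReachIn N T a x) ∧
      ∀ x ∈ insert a T, ∀ y, N.Arc x y → y ∉ I →
        ∃ F ⊆ T, F.Finite ∧ y ∈ F ∪ webRoof N (I ∪ F) := by
  obtain ⟨T, hT⟩ := zorn_subset {T | Deletable N I T ∧ ∀ x ∈ T, ReachIn N T a x} (by
    intro c hc hch
    rcases c.eq_empty_or_nonempty with rfl | hne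
    · refine ⟨∅, ⟨⟨Set.empty_disjoint _, Set.empty_disjoint _, fun F hF _ => ?_⟩, by simp⟩, by simp⟩
      rwa [Set.subset_empty_iff.1 hF, Set.union_empty]
    · refine ⟨⋃₀ c, ⟨.sUnion (fun T hT => (hc hT).1) hch.directedOn hne, ?_⟩,
        fun T hT => Set.subset_sUnion_of_mem hT⟩
      rintro x ⟨T, hT, hx⟩
      exact ((hc hT).2 x hx).mono (Set.subset_sUnion_of_mem hT))
  obtain ⟨hTd, hTr⟩ := hT.prop
  refine ⟨T, hTd, hTr, fun x hx y hxy hyI => ?_⟩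
  by_cases hyT : y ∈ T
  · exact ⟨{y}, Set.singleton_subset_iff.2 hyT, Set.finite_singleton y, .inl rfl⟩
  by_contra! hy
  have hx' : ReachIn N T a x := hx.elim (fun h => h ▸ .refl) (hTr x)
  refine hyT (hT.le_of_ge ⟨hTd.insert (N.notMem_source_of_arc hxy) hyI
    fun F hF hfin h => hy F hF hfin (.inr h), ?_⟩ (Set.subset_insert y T) (.inl rfl))
  rintro z (rfl | hz)
  · exact (hx'.mono (Set.subset_insert _ T)).tail ⟨hxy, .inl rfl⟩
  · exact (hTr z hz).mono (Set.subset_insert y T)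

/-- A finite set `S` through which a path leads from `a` to a sink, and which contains no source
other than `a`. -/
structure IsCrossing (N : Web Ω) (a : Ω) (S : Set Ω) : Prop where
  finite : S.Finite
  inter_source_subset : S ∩ N.source ⊆ {a}
  exists_sink : ∃ b ∈ N.sink, ReachIn N S a b

/-- A maximal deletable set reachable from `a` contains a sink: otherwise its core together with `a`
could be restored into the interior of a wave, which would miss `a`. -/
theorem Unhindered.exists_isCrossing (hI : Unhindered N I) {a : Ω} (ha : a ∈ N.source)
    (haI : a ∉ I) : ∃ S, a ∈ S ∧ IsCrossing N a S ∧ Disjoint S I ∧ Unhindered N (I ∪ S) := by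
  obtain ⟨T, hT, hreach, hout⟩ := exists_maximal_deletable (hI.insert_source ha) a
  by_cases hB : ∃ b ∈ insert a T, b ∈ N.sink
  · obtain ⟨b, hbT, hb⟩ := hB
    have hab : ReachIn N T a b := hbT.elim (fun h => h ▸ .refl) (hreach b)
    obtain ⟨D, hDT, hD, hab⟩ := hab.exists_finite
    have hDA := hT.disjoint_source.mono_left hDT
    have hDI := hT.disjoint.mono hDT (Set.subset_insert a I)
    refine ⟨insert a D, .inl rfl, ⟨hD.insert a, ?_, b, hb, hab.mono (Set.subset_insert a D)⟩,
      Set.disjoint_insert_left.2 ⟨haI, hDI⟩, ?_⟩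
    · rintro x ⟨hx, hxA⟩
      exact hx.resolve_right (hDA.notMem_of_mem_right hxA)
    · rw [Set.union_insert, ← Set.insert_union]
      exact hT.unhindered D hDT hD
  · have hB' : Disjoint (insert a T) N.sink := Set.disjoint_left.2 fun b hb hbB => hB ⟨b, hb, hbB⟩
    have hTB := hB'.mono_left (Set.subset_insert a T)
    set C := core N (insert a I) T
    have hC : insert a C ⊆ insert a T := Set.insert_subset_insert fun c hc => hc.1
    obtain ⟨m, hm, -, hmax⟩ := (isWave_trivial N (insert a I ∪ C)).exists_greatest
    have hout' : ∀ g ∈ insert a C, ∀ z, N.Arc g z → z ∈ m.roof ∪ (insert a I ∪ C) := by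
      intro g hg z hz
      by_cases hzI : z ∈ insert a I
      · exact .inr (.inl hzI)
      obtain ⟨F, hF, hfin, hzF⟩ := hout g (hC hg) z hz hzI
      rcases hT.mem_core_or_mem_webRoof hTB hF hfin hzF with h | ⟨k, hk, h⟩
      · exact .inr (.inr h)
      · exact .inl ((hmax k hk).2 h)
    have ham := hm.roof_disjoint.notMem_of_mem_right (.inl (.inl rfl))
    rw [Set.insert_union, ← Set.union_insert] at hm hout'
    refine absurd (hI _ (hm.fill ?_ (hB'.mono_left hC) hout') ⟨ha, haI⟩)
      fun h => ham (hm.verts_subset_roof h)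
    exact Set.disjoint_insert_left.2 ⟨haI, hT.disjoint.mono (fun c hc => hc.1)
      (Set.subset_insert a I)⟩

end Web

/-! ### Towers -/

namespace Web

open Wave

variable {Ω : Type w} {N : Web Ω} {I : Set Ω} {ι : Type*}

/-- One stage of a transfinite construction: a wave of the web after deleting the set `deleted`,
rerouted so as to cover additionally the vertices `targets`. -/
structure Stage (Ω : Type w) extends Wave Ω where
  deleted : Set Ω
  targets : Set Ω

/-- `d` is a stage for the web `N - I`. -/
structure IsStage (N : Web Ω) (I : Set Ω) (d : Stage Ω) : Prop
    extends IsSeparating N (I ∪ d.deleted) d.toWave where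
  targets_disjoint : Disjoint d.targets I
  isLinked : IsLinked N ⟨d.interior, d.front ∪ d.targets, d.verts, d.pred⟩

namespace IsStage

variable {d : Stage Ω} {u : Ω}

theorem pred_mem_interior (hd : IsStage N I d) (hu : u ∈ d.verts) (huA : u ∉ N.source) :
    d.pred u ∈ d.interior :=
  hd.isLinked.pred_mem_interior u hu huA

theorem pred_mem (hd : IsStage N I d) (hu : u ∈ d.verts) (huA : u ∉ N.source) :
    d.pred u ∈ d.verts :=
  hd.isLinked.pred_mem u hu huA

theorem arc_pred (hd : IsStage N I d) (hu : u ∈ d.verts) (huA : u ∉ N.source) :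
    N.Arc (d.pred u) u :=
  hd.isLinked.arc_pred u hu huA

theorem mem_verts_of_notMem_interior (hd : IsStage N I d) (hu : u ∈ d.roof ∪ d.targets)
    (huX : u ∉ d.interior) : u ∈ d.verts :=
  hd.isLinked.front_subset_verts (by grind)

theorem notMem_of_mem_roof (hd : IsStage N I d) (hu : u ∈ d.roof) : u ∉ d.deleted := fun h =>
  hd.roof_disjoint.notMem_of_mem_left hu (.inr h)

theorem disjoint (hd : IsStage N I d) : Disjoint (d.roof ∪ d.targets) I :=
  Set.disjoint_union_left.2
    ⟨hd.roof_disjoint.mono_right Set.subset_union_left, hd.targets_disjoint⟩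

end IsStage

/-- The deleted set `M` of a later stage is compatible with the stage `d`. -/
structure Precedes (N : Web Ω) (d : Stage Ω) (M : Set Ω) : Prop where
  deleted_subset : d.deleted ⊆ M
  pred_mem_iff : ∀ u ∈ d.verts, u ∉ N.source → (d.pred u ∈ M ↔ u ∈ M)

/-- The vertices reached by an arc leaving the roof of `k` from its interior, except for those
in `I`. -/
def errors (N : Web Ω) (I : Set Ω) (k : Wave Ω) : Set Ω :=
  {y | y ∉ k.roof ∪ I ∧ ∃ x ∈ k.interior, N.Arc x y}

/-- A tower: a sequence of stages that fit together to one wave, see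
`IsTower.isWave_amalgam`. -/
structure IsTower [LinearOrder ι] (N : Web Ω) (I : Set Ω) (f : ι → Stage Ω) : Prop where
  isStage : ∀ i, IsStage N I (f i)
  precedes : ∀ {i j}, i < j → Precedes N (f i) (f j).deleted
  exists_mem_targets : ∀ i, ∀ y ∈ errors N I (f i).toWave, ∃ j, y ∈ (f j).targets

namespace Tower

/-- The vertices met by some stage. -/
def domain (f : ι → Stage Ω) : Set Ω := ⋃ i, ((f i).roof ∪ (f i).targets)

theorem mem_domain {f : ι → Stage Ω} {i : ι} {u : Ω} (hu : u ∈ (f i).roof ∪ (f i).targets) :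
    u ∈ domain f :=
  Set.mem_iUnion.2 ⟨i, hu⟩

variable [LinearOrder ι]

/-- Stage `i` is the last one before `u` is deleted, and it has `u` in its roof. -/
def IsHome (f : ι → Stage Ω) (u : Ω) (i : ι) : Prop :=
  u ∈ (f i).roof ∧ ∀ j, i < j → u ∈ (f j).deleted

/-- Stage `i` is the one deciding about `u` in the amalgam: the home of `u` or, if there is none,
the first stage meeting `u`. -/
def IsIndex (f : ι → Stage Ω) (u : Ω) (i : ι) : Prop :=
  IsHome f u i ∨ (∀ j, ¬ IsHome f u j) ∧ u ∈ (f i).roof ∪ (f i).targets ∧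
    ∀ j < i, u ∉ (f j).roof ∪ (f j).targets

/-- The stage deciding about `u`, with a junk value outside `domain f`. -/
noncomputable def index [Nonempty ι] (f : ι → Stage Ω) (u : Ω) : ι :=
  Classical.epsilon (IsIndex f u)

/-- The wave assembled from all stages, each vertex being treated as in its deciding stage. The
sources met by no stage are added as trivial paths. -/
noncomputable def amalgam [Nonempty ι] (N : Web Ω) (I : Set Ω) (f : ι → Stage Ω) : Wave Ω where
  interior := ⋃ i, (f i).interior
  front := (domain f ∪ N.source \ I) \ ⋃ i, (f i).interior
  verts := {u ∈ domain f | u ∈ (f (index f u)).verts} ∪ (N.source \ I) \ domain f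
  pred u := (f (index f u)).pred u

variable {f : ι → Stage Ω} {u v : Ω} {i j : ι}

theorem index_spec [Nonempty ι] [WellFoundedLT ι] (hu : u ∈ domain f) :
    IsIndex f u (index f u) := by
  apply Classical.epsilon_spec (p := IsIndex f u)
  by_cases hL : ∃ i, IsHome f u i
  · exact hL.imp fun i hi => .inl hi
  · obtain ⟨i, hi, hmin⟩ := wellFounded_lt.has_min {i | u ∈ (f i).roof ∪ (f i).targets}
      (Set.mem_iUnion.1 hu)
    exact ⟨i, .inr ⟨not_exists.1 hL, hi, fun j hj h => hmin j h hj⟩⟩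

theorem mem_of_index [Nonempty ι] [WellFoundedLT ι] (hu : u ∈ domain f) :
    u ∈ (f (index f u)).roof ∪ (f (index f u)).targets :=
  (index_spec hu).elim (fun h => .inl h.1) fun h => h.2.1

theorem isHome_of_lt_index [Nonempty ι] [WellFoundedLT ι] (hu : u ∈ (f i).roof)
    (hi : i < index f u) : IsHome f u (index f u) :=
  (index_spec (mem_domain (.inl hu))).resolve_right fun h => h.2.2 i hi (.inl hu)

theorem amalgam_roof [Nonempty ι] : (amalgam N I f).roof = domain f ∪ N.source \ I := by
  have hX : ⋃ i, (f i).interior ⊆ domain f :=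
    Set.iUnion_mono fun i => Set.subset_union_left.trans Set.subset_union_left
  exact Set.union_sdiff_cancel (hX.trans Set.subset_union_left)

end Tower

open Tower

namespace IsTower

variable [LinearOrder ι] {f : ι → Stage Ω} {u v : Ω} {i j : ι}

theorem isHome_unique (hf : IsTower N I f) (hi : IsHome f u i) (hj : IsHome f u j) : i = j :=
  le_antisymm
    (not_lt.1 fun h => (hf.isStage i).notMem_of_mem_roof hi.1 (hj.2 i h))
    (not_lt.1 fun h => (hf.isStage j).notMem_of_mem_roof hj.1 (hi.2 j h))

theorem isHome_pred (hf : IsTower N I f) (hu : u ∈ (f i).verts) (huA : u ∉ N.source)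
    (h : ∀ j, i < j → u ∈ (f j).deleted) : IsHome f ((f i).pred u) i :=
  ⟨.inl ((hf.isStage i).pred_mem_interior hu huA),
    fun j hij => ((hf.precedes hij).pred_mem_iff u hu huA).2 (h j hij)⟩

theorem domain_disjoint (hf : IsTower N I f) : Disjoint (domain f) I :=
  Set.disjoint_iUnion_left.2 fun i => (hf.isStage i).disjoint

theorem pred_mem_domain (hf : IsTower N I f) (hu : u ∈ (f i).verts) (huA : u ∉ N.source) :
    (f i).pred u ∈ domain f :=
  mem_domain (.inl (.inl ((hf.isStage i).pred_mem_interior hu huA)))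

theorem isSeparating_amalgam [Nonempty ι] (hf : IsTower N I f) :
    IsSeparating N I (amalgam N I f) where
  roof_disjoint := by
    rw [amalgam_roof]
    exact Set.disjoint_union_left.2 ⟨hf.domain_disjoint, Set.disjoint_sdiff_left⟩
  interior_disjoint_front := Set.disjoint_sdiff_right
  interior_disjoint_sink :=
    Set.disjoint_iUnion_left.2 fun i => (hf.isStage i).interior_disjoint_sink
  mem_roof_of_source a ha haI := by
    rw [amalgam_roof]
    exact .inr ⟨ha, haI⟩
  arc_closed x hx y hxy := by
    obtain ⟨i, hi⟩ := Set.mem_iUnion.1 hx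
    by_contra h
    have hyD : y ∉ domain f := fun hD => h (.inl (by rw [amalgam_roof]; exact .inl hD))
    obtain ⟨j, hj⟩ := hf.exists_mem_targets i y
      ⟨fun h' => h'.elim (fun h' => hyD (mem_domain (.inl h'))) fun h' => h (.inr h'), x, hi, hxy⟩
    exact hyD (mem_domain (.inr hj))

variable [Nonempty ι] [WellFoundedLT ι]

theorem index_eq_of_isHome (hf : IsTower N I f) (hu : IsHome f u i) : index f u = i :=
  (index_spec (mem_domain (.inl hu.1))).elim (fun h => hf.isHome_unique h hu)
    fun h => absurd hu (h.1 i)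

theorem isHome_pred_of_lt_index (hf : IsTower N I f) (hu : u ∈ domain f)
    (huU : u ∈ (f (index f u)).verts) (huA : u ∉ N.source) (hj : j < index f u)
    (hpX : (f (index f u)).pred u ∈ (f j).interior) :
    IsHome f ((f (index f u)).pred u) (index f u) := by
  refine hf.isHome_pred huU huA fun l hl => ?_
  rcases index_spec hu with h | ⟨-, -, hmin⟩
  · exact h.2 l hl
  · have harc := (hf.isStage _).arc_pred huU huA
    have huI := hf.domain_disjoint.notMem_of_mem_left hu
    have := (hf.isStage j).arc_closed _ hpX u harc
    have := hmin j hj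
    exact (hf.precedes (hj.trans hl)).deleted_subset (by grind)

theorem not_isHome_pred_of_index_lt (hf : IsTower N I f) (hu : u ∈ domain f)
    (huU : u ∈ (f (index f u)).verts) (huA : u ∉ N.source) (hj : index f u < j)
    (hpX : (f (index f u)).pred u ∈ (f j).interior) :
    ¬ IsHome f ((f (index f u)).pred u) j := by
  intro hp
  have hiff := fun l hl => (hf.precedes (i := index f u) (j := l) hl).pred_mem_iff u huU huA
  have huM : u ∉ (f j).deleted := fun h =>
    (hf.isStage j).notMem_of_mem_roof hp.1 ((hiff j hj).2 h)
  have hroof : u ∈ (f j).roof := by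
    have := (hf.isStage j).arc_closed _ hpX u ((hf.isStage _).arc_pred huU huA)
    have := hf.domain_disjoint.notMem_of_mem_left hu
    grind
  exact hj.ne (hf.index_eq_of_isHome
    ⟨hroof, fun l hl => (hiff l (hj.trans hl)).1 (hp.2 l hl)⟩)

theorem pred_mem_verts_index (hf : IsTower N I f) (hu : u ∈ domain f)
    (huU : u ∈ (f (index f u)).verts) (huA : u ∉ N.source) :
    (f (index f u)).pred u ∈ (f (index f ((f (index f u)).pred u))).verts := by
  set p := (f (index f u)).pred u
  have hpX : p ∈ (f (index f u)).interior := (hf.isStage _).pred_mem_interior huU huA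
  by_cases hX : p ∈ (f (index f p)).interior
  · rcases lt_trichotomy (index f p) (index f u) with h | h | h
    · exact absurd (hf.index_eq_of_isHome (hf.isHome_pred_of_lt_index hu huU huA h hX)) h.ne
    · exact h ▸ (hf.isStage _).pred_mem huU huA
    · exact absurd (isHome_of_lt_index (.inl hpX) h)
        (hf.not_isHome_pred_of_index_lt hu huU huA h hX)
  · exact (hf.isStage _).mem_verts_of_notMem_interior
      (mem_of_index (hf.pred_mem_domain huU huA)) hX

theorem index_le_of_pred_eq (hf : IsTower N I f) (hu : u ∈ domain f) (hv : v ∈ domain f)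
    (huU : u ∈ (f (index f u)).verts) (hvU : v ∈ (f (index f v)).verts) (huA : u ∉ N.source)
    (hvA : v ∉ N.source) (huv : (f (index f u)).pred u = (f (index f v)).pred v) :
    index f v ≤ index f u := by
  by_contra! hlt
  have hX := (hf.isStage _).pred_mem_interior huU huA
  have hX' := (hf.isStage _).pred_mem_interior hvU hvA
  have hhome := hf.isHome_pred_of_lt_index hv hvU hvA hlt (huv ▸ hX)
  rw [← huv] at hhome hX'
  exact hf.not_isHome_pred_of_index_lt hu huU huA hlt hX' hhome

theorem rooted_of_isHome (hf : IsTower N I f) (hu : IsHome f u i) (huU : u ∈ (f i).verts) :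
    Rooted N.source (amalgam N I f).pred u := by
  refine ((hf.isStage i).isLinked.rooted u huU).transfer
    (P := {u | IsHome f u i ∧ u ∈ (f i).verts}) ?_ ⟨hu, huU⟩
  rintro v ⟨hv, hvU⟩ hvA
  exact .inl ⟨by simp only [amalgam, hf.index_eq_of_isHome hv],
    hf.isHome_pred hvU hvA hv.2, (hf.isStage i).pred_mem hvU hvA⟩

theorem rooted (hf : IsTower N I f) (hu : u ∈ domain f) (huU : u ∈ (f (index f u)).verts) :
    Rooted N.source (amalgam N I f).pred u := by
  induction hi : index f u using WellFoundedLT.induction generalizing u with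
  | ind i ih =>
    refine ((hf.isStage i).isLinked.rooted u (hi ▸ huU)).transfer
      (P := {v | v ∈ domain f ∧ index f v = i ∧ v ∈ (f i).verts}) ?_ ⟨hu, hi, hi ▸ huU⟩
    rintro v ⟨hv, rfl, hvU⟩ hvA
    have hpX := (hf.isStage _).pred_mem_interior hvU hvA
    have hpD := hf.pred_mem_domain hvU hvA
    have hpU := hf.pred_mem_verts_index hv hvU hvA
    rcases lt_trichotomy (index f ((f (index f v)).pred v)) (index f v) with h | h | h
    · exact .inr (.step (ih _ h hpD hpU rfl))
    · exact .inl ⟨rfl, hpD, h, (hf.isStage _).pred_mem hvU hvA⟩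
    · exact .inr (.step (hf.rooted_of_isHome (isHome_of_lt_index (.inl hpX) h) hpU))

theorem isLinked_amalgam (hf : IsTower N I f) : IsLinked N (amalgam N I f) where
  pred_mem u hu huA := by
    obtain ⟨hu, huU⟩ := hu.resolve_right fun h => huA h.1.1
    exact .inl ⟨hf.pred_mem_domain huU huA, hf.pred_mem_verts_index hu huU huA⟩
  arc_pred u hu huA :=
    (hf.isStage _).arc_pred (hu.resolve_right fun h => huA h.1.1).2 huA
  pred_injOn := by
    rintro u ⟨hu, huA⟩ v ⟨hv, hvA⟩ huv
    obtain ⟨hu, huU⟩ := hu.resolve_right fun h => huA h.1.1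
    obtain ⟨hv, hvU⟩ := hv.resolve_right fun h => hvA h.1.1
    have hindex : index f u = index f v :=
      le_antisymm (hf.index_le_of_pred_eq hv hu hvU huU hvA huA huv.symm)
        (hf.index_le_of_pred_eq hu hv huU hvU huA hvA huv)
    refine (hf.isStage (index f u)).isLinked.pred_injOn ⟨huU, huA⟩ ⟨hindex ▸ hvU, hvA⟩ ?_
    simpa only [amalgam, ← hindex] using huv
  rooted u hu := hu.elim (fun h => hf.rooted h.1 h.2) fun h => .base h.1.1
  pred_mem_interior u hu huA := Set.mem_iUnion.2
    ⟨_, (hf.isStage _).pred_mem_interior (hu.resolve_right fun h => huA h.1.1).2 huA⟩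
  verts_subset_roof := by
    rw [amalgam_roof]
    exact Set.union_subset_union (Set.sep_subset _ _) Set.sdiff_subset
  front_subset_verts u hu := by
    by_cases huD : u ∈ domain f
    · exact .inl ⟨huD, (hf.isStage _).mem_verts_of_notMem_interior (mem_of_index huD)
        fun h => hu.2 (Set.mem_iUnion.2 ⟨_, h⟩)⟩
    · exact .inr ⟨hu.1.resolve_left huD, huD⟩

theorem isWave_amalgam (hf : IsTower N I f) : IsWave N I (amalgam N I f) where
  toIsSeparating := hf.isSeparating_amalgam
  toIsLinked := hf.isLinked_amalgam

omit [Nonempty ι] in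
theorem not_unhindered (hf : IsTower N I f) {a : Ω} (ha : a ∈ N.source) (hai : IsHome f a i)
    (haU : a ∉ (f i).verts) : ¬ Unhindered N I := by
  intro hI
  have : Nonempty ι := ⟨i⟩
  have haD : a ∈ domain f := mem_domain (.inl hai.1)
  have haI := hf.domain_disjoint.notMem_of_mem_left haD
  rcases hI _ hf.isWave_amalgam ⟨ha, haI⟩ with h | h
  · exact haU (hf.index_eq_of_isHome hai ▸ h.2)
  · exact h.2 haD

end IsTower

end Web

/-! ### Stationary sets of hindrances -/

namespace Web

open Cardinal Filter

section clubFilter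

variable {Ω : Type w} {κ : Cardinal.{w}}

theorem mk_union_lt (hκ : ℵ₀ ≤ κ) {s t : Set Ω} (hs : #s < κ) (ht : #t < κ) :
    #(s ∪ t : Set Ω) < κ :=
  (mk_union_le s t).trans_lt (add_lt_of_lt hκ hs ht)

/-- `M` is closed under the operation `F`, which takes any finite number of arguments. -/
def ClosedUnder (F : Finset Ω → Set Ω) (M : Set Ω) : Prop := ∀ s : Finset Ω, ↑s ⊆ M → F s ⊆ M

theorem ClosedUnder.mono {F G : Finset Ω → Set Ω} {M : Set Ω} (hG : ClosedUnder G M)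
    (h : ∀ s, F s ⊆ G s) : ClosedUnder F M := fun s hs => (h s).trans (hG s hs)

/-- The club filter on the sets of size `< κ`: a property holds eventually if it holds for all
sets of size `< κ` closed under some operation with values of size `< κ`. -/
def clubFilter (Ω : Type w) (hκ : κ.IsRegular) : Filter (Set Ω) :=
  .ofCardinalInter
    {P | ∃ F : Finset Ω → Set Ω, (∀ s, #(F s) < κ) ∧ ∀ M : Set Ω, #M < κ → ClosedUnder F M → M ∈ P}
    (c := κ) ((natCast_lt_aleph0 (n := 2)).trans_le hκ.aleph0_le)
    (by
      intro S hS hSP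
      choose F hF hFP using fun P : S => hSP P.2
      refine ⟨fun s => ⋃ P, F P s, fun s => (card_iUnion_lt_iff_forall_of_isRegular hκ hS).2
        fun P => hF P s, fun M hM hcl P hP => hFP ⟨P, hP⟩ M hM (hcl.mono fun s => ?_)⟩
      exact Set.subset_iUnion (fun P => F P s) ⟨P, hP⟩)
    (by
      rintro P Q ⟨F, hF, hFP⟩ hPQ
      exact ⟨F, hF, fun M hM hcl => hPQ (hFP M hM hcl)⟩)

instance (hκ : κ.IsRegular) : CardinalInterFilter (clubFilter Ω hκ) κ :=
  cardinalInter_ofCardinalInter _ _ _ _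

variable (hκ : κ.IsRegular)
include hκ

theorem eventually_clubFilter {P : Set Ω → Prop} : (∀ᶠ M in clubFilter Ω hκ, P M) ↔
    ∃ F : Finset Ω → Set Ω, (∀ s, #(F s) < κ) ∧ ∀ M : Set Ω, #M < κ → ClosedUnder F M → P M :=
  Iff.rfl

theorem eventually_mk_lt : ∀ᶠ M : Set Ω in clubFilter Ω hκ, #M < κ :=
  ⟨fun _ => ∅, fun _ => by simpa using hκ.pos, fun _ hM _ => hM⟩

theorem eventually_superset {B : Set Ω} (hB : #B < κ) : ∀ᶠ M in clubFilter Ω hκ, B ⊆ M :=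
  ⟨fun _ => B, fun _ => hB, fun _ _ hcl => hcl ∅ (by simp)⟩

theorem eventually_forall_mem {P : Ω → Set Ω → Prop} (h : ∀ x, ∀ᶠ M in clubFilter Ω hκ, P x M) :
    ∀ᶠ M in clubFilter Ω hκ, ∀ x ∈ M, P x M := by
  choose F hF hFP using h
  classical
  refine ⟨fun s => ⋃ p : {p : Ω × Finset Ω // p ∈ s ×ˢ s.powerset}, F p.1.1 p.1.2, fun s => ?_,
    fun M hM hcl x hx => hFP x M hM fun s hs y hy => ?_⟩
  · refine (card_iUnion_lt_iff_forall_of_isRegular hκ ?_).2 fun p => hF _ _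
    exact (lt_aleph0_of_finite _).trans_le hκ.aleph0_le
  · refine hcl (insert x s) (by simpa [Set.insert_subset_iff] using ⟨hx, hs⟩)
      (Set.mem_iUnion.2 ⟨⟨(x, s), ?_⟩, hy⟩)
    simp [Finset.subset_insert]

theorem eventually_forall_subset {H : Ω → Set Ω} (hH : ∀ x, #(H x) < κ) :
    ∀ᶠ M in clubFilter Ω hκ, ∀ x ∈ M, H x ⊆ M :=
  eventually_forall_mem hκ fun x => eventually_superset hκ (hH x)

end clubFilter

section recursion

theorem exists_forall_of_wellFoundedLT {ι : Type*} [LT ι] [WellFoundedLT ι] {D : Type*}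
    (P : (i : ι) → ((j : ι) → j < i → D) → D → Prop) (h : ∀ i g, ∃ d, P i g d) :
    ∃ f : ι → D, ∀ i, P i (fun j _ => f j) (f i) := by
  choose c hc using h
  let f : ι → D := wellFounded_lt.fix c
  refine ⟨f, fun i => ?_⟩
  rw [show f i = c i fun j _ => f j from wellFounded_lt.fix_eq c i]
  exact hc i _

theorem exists_subset_range {Ω ι : Type w} [Nonempty Ω] {s : Set Ω} (h : #s ≤ #ι) :
    ∃ e : ι → Ω, s ⊆ Set.range e := by
  obtain ⟨g⟩ := h
  refine ⟨Function.extend g Subtype.val fun _ => Classical.arbitrary Ω, fun x hx => ⟨g ⟨x, hx⟩, ?_⟩⟩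
  exact g.injective.extend_apply _ _ _

theorem mk_Iic_toType_lt {μ : Cardinal.{w}} (hμ : ℵ₀ ≤ μ) (i : μ.ord.ToType) :
    #(Set.Iic i) < μ := by
  rw [← Set.Iio_insert]
  exact mk_insert_le.trans_lt
    (add_lt_of_lt hμ (by simpa using mk_Iio_lt i) (one_lt_aleph0.trans_le hμ))

theorem exists_bookkeeping {κ : Cardinal.{w}} (hκ : ℵ₀ ≤ κ) :
    ∃ b : κ.ord.ToType → κ.ord.ToType × κ.ord.ToType, ∀ p, ∃ i, p.1 < i ∧ b i = p := by
  have hcard : #((κ.ord.ToType × κ.ord.ToType) × κ.ord.ToType) = #κ.ord.ToType := by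
    simp [mul_eq_self hκ]
  obtain ⟨e⟩ := Cardinal.eq.1 hcard
  refine ⟨fun i => (e.symm i).1, fun p => ?_⟩
  obtain ⟨x, hx⟩ : ∃ x, p.1 < e (p, x) := by
    by_contra! hle
    have hinj : #κ.ord.ToType ≤ #(Set.Iic p.1) :=
      mk_le_of_injective (f := fun x => ⟨e (p, x), hle x⟩) fun x y h => by
        simpa using congrArg Subtype.val h
    exact (mk_Iic_toType_lt hκ p.1).not_ge (by simpa using hinj)
  exact ⟨e (p, x), hx, by simp⟩

end recursion

variable {Ω : Type w} {N : Web Ω} {I : Set Ω}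

theorem IsStage.errors_subset {d : Stage Ω} (hd : IsStage N I d) :
    errors N I d.toWave ⊆ d.deleted := by
  rintro y ⟨hy, x, hx, hxy⟩
  have := hd.arc_closed x hx y hxy
  grind

/-- `k` is a wave in `N - I` missing the source `a`, and it can be rerouted to any vertex reached
by an arc leaving its roof from its interior. -/
structure IsHindrance (N : Web Ω) (I : Set Ω) (k : Wave Ω) (a : Ω) : Prop extends IsWave N I k where
  mem_source : a ∈ N.source
  mem_interior : a ∈ k.interior
  notMem_verts : a ∉ k.verts
  reaches : ∀ x ∈ k.interior, ∀ y, N.Arc x y → y ∉ k.roof → Reaches N k y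

theorem exists_isHindrance (h : ¬ Unhindered N I) : ∃ k a, IsHindrance N I k a := by
  simp only [Unhindered, Set.not_subset, not_forall] at h
  obtain ⟨k, hk, a, ⟨ha, haI⟩, haU⟩ := h
  obtain ⟨l, hl, -, -, haX, haV, hreach⟩ := hk.exists_reaches ha haI haU
  exact ⟨l, a, hl, ha, haX, haV, hreach⟩

namespace IsHindrance

variable {M : Set Ω} {k : Wave Ω} {a : Ω}

theorem isStage (h : IsHindrance N (I ∪ M) k a) : IsStage N I ⟨k, M, ∅⟩ where
  toIsSeparating := h.toIsSeparating
  targets_disjoint := Set.empty_disjoint _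
  isLinked := by simpa using h.toIsLinked

theorem exists_isStage (h : IsHindrance N (I ∪ M) k a) {y : Ω} (hy : y ∈ errors N I k) :
    ∃ U p, IsStage N I ⟨⟨k.interior, k.front, U, p⟩, M, {y}⟩ := by
  obtain ⟨hy, x, hx, hxy⟩ := hy
  obtain ⟨U, p, hp⟩ := h.reaches x hx y hxy fun hyk => hy (.inl hyk)
  exact ⟨U, p,
    { roof_disjoint := h.roof_disjoint
      interior_disjoint_front := h.interior_disjoint_front
      interior_disjoint_sink := h.interior_disjoint_sink
      mem_roof_of_source := h.mem_roof_of_source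
      arc_closed := h.arc_closed
      targets_disjoint := Set.disjoint_singleton_left.2 fun hyI => hy (.inr hyI)
      isLinked := by simpa only [Set.union_singleton] using hp }⟩

end IsHindrance

section SmallStage

variable {κ : Cardinal.{w}} (hκ : κ.IsRegular)

/-- The errors that cannot be avoided by restricting the deleted set to a club. -/
def persistentErrors (N : Web Ω) (I : Set Ω) (hκ : κ.IsRegular) : Set Ω :=
  {y | ∃ᶠ M in clubFilter Ω hκ, ∃ k a, IsHindrance N (I ∪ M) k a ∧ y ∈ errors N I k}

/-- A stage of size `< κ` whose errors are all persistent. -/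
structure IsSmallStage (N : Web Ω) (I : Set Ω) (hκ : κ.IsRegular) (d : Stage Ω) : Prop
    extends IsStage N I d where
  mk_lt : #d.deleted < κ
  errors_subset : errors N I d.toWave ⊆ persistentErrors N I hκ

variable {hκ}

theorem eventually_errors_subset : ∀ᶠ M in clubFilter Ω hκ, ∀ k a,
    IsHindrance N (I ∪ M) k a → errors N I k ⊆ persistentErrors N I hκ := by
  have h : ∀ y, ∀ᶠ M in clubFilter Ω hκ, y ∉ persistentErrors N I hκ →
      ∀ k a, IsHindrance N (I ∪ M) k a → y ∉ errors N I k := fun y => by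
    by_cases hy : y ∈ persistentErrors N I hκ
    · exact .of_forall fun M h => absurd hy h
    · exact (not_frequently.1 hy).mono fun M h _ k a hk hyk => h ⟨k, a, hk, hyk⟩
  filter_upwards [eventually_forall_mem hκ h] with M hM k a hk y hy
  by_contra hyP
  exact hM y (hk.isStage.errors_subset hy) hyP k a hk hy

theorem frequently_isSmallStage (h : ∃ᶠ M in clubFilter Ω hκ, ¬ Unhindered N (I ∪ M)) :
    ∃ᶠ M in clubFilter Ω hκ, ∃ d, IsSmallStage N I hκ d ∧ d.deleted = M ∧
      ∃ a ∈ N.source, a ∈ d.interior ∧ a ∉ d.verts := by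
  refine (h.and_eventually ((eventually_mk_lt hκ).and
    (eventually_errors_subset (N := N) (I := I)))).mono fun M ⟨hM, hMκ, hMP⟩ => ?_
  obtain ⟨k, a, hk⟩ := exists_isHindrance hM
  exact ⟨_, ⟨hk.isStage, hMκ, hMP k a hk⟩, rfl, a, hk.mem_source, hk.mem_interior, hk.notMem_verts⟩

theorem frequently_isSmallStage_mem_targets {y : Ω} (hy : y ∈ persistentErrors N I hκ) :
    ∃ᶠ M in clubFilter Ω hκ, ∃ d, IsSmallStage N I hκ d ∧ d.deleted = M ∧ y ∈ d.targets := by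
  refine (Frequently.and_eventually hy ((eventually_mk_lt hκ).and
    (eventually_errors_subset (N := N) (I := I)))).mono fun M ⟨⟨k, a, hk, hyk⟩, hMκ, hMP⟩ => ?_
  obtain ⟨U, p, hd⟩ := hk.exists_isStage hyk
  exact ⟨_, ⟨hd, hMκ, hMP k a hk⟩, rfl, rfl⟩

theorem IsStage.eventually_precedes {d : Stage Ω} (hd : IsStage N I d) (hdκ : #d.deleted < κ) :
    ∀ᶠ M in clubFilter Ω hκ, Precedes N d M := by
  have hsmall : ∀ {s : Set Ω}, s.Subsingleton → #s < κ := fun hs =>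
    (mk_le_one_iff_set_subsingleton.2 hs).trans_lt (one_lt_aleph0.trans_le hκ.aleph0_le)
  have hsucc : ∀ u, {v ∈ d.verts \ N.source | d.pred v = u}.Subsingleton := fun u v hv v' hv' =>
    hd.isLinked.pred_injOn hv.1 hv'.1 (hv.2.trans hv'.2.symm)
  filter_upwards [eventually_superset hκ hdκ,
    eventually_forall_subset hκ fun u => hsmall (Set.subsingleton_singleton (a := d.pred u)),
    eventually_forall_subset hκ fun u => hsmall (hsucc u)] with M hM hpred hsucc
  exact ⟨hM, fun u hu huA => ⟨fun h => hsucc _ h ⟨⟨hu, huA⟩, rfl⟩, fun h => hpred u h rfl⟩⟩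

theorem exists_isSmallStage (h : ∃ᶠ M in clubFilter Ω hκ, ¬ Unhindered N (I ∪ M)) {σ : Type w}
    (hσ : #σ < κ) {g : σ → Stage Ω} (hg : ∀ i, IsSmallStage N I hκ (g i)) (a y : Ω) :
    ∃ d, IsSmallStage N I hκ d ∧ (∀ i, Precedes N (g i) d.deleted) ∧ a ∈ d.deleted ∧
      (y ∈ persistentErrors N I hκ → y ∈ d.targets) := by
  have hev : ∀ᶠ M in clubFilter Ω hκ, (∀ i, Precedes N (g i) M) ∧ {a} ⊆ M :=
    ((eventually_cardinal_forall hσ).2 fun i => (hg i).eventually_precedes (hg i).mk_lt).and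
      (eventually_superset hκ (by simpa using one_lt_aleph0.trans_le hκ.aleph0_le))
  by_cases hy : y ∈ persistentErrors N I hκ
  · obtain ⟨M, ⟨d, hd, rfl, hyd⟩, hgd, had⟩ :=
      ((frequently_isSmallStage_mem_targets hy).and_eventually hev).exists
    exact ⟨d, hd, hgd, had rfl, fun _ => hyd⟩
  · obtain ⟨M, ⟨d, hd, rfl, -⟩, hgd, had⟩ :=
      ((frequently_isSmallStage h).and_eventually hev).exists
    exact ⟨d, hd, hgd, had rfl, fun hy' => absurd hy' hy⟩

theorem exists_isTower (h : ∃ᶠ M in clubFilter Ω hκ, ¬ Unhindered N (I ∪ M)) :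
    ∃ f : κ.ord.ToType → Stage Ω, IsTower N I f ∧
      ∃ i, ∃ a ∈ N.source, Tower.IsHome f a i ∧ a ∉ (f i).verts := by
  classical
  obtain ⟨_, d₀, hd₀, -, a, ha, haX, haU⟩ := (frequently_isSmallStage h).exists
  have : Nonempty Ω := ⟨a⟩
  obtain ⟨b, hb⟩ := exists_bookkeeping hκ.aleph0_le
  have henum : ∀ d : {d // IsSmallStage N I hκ d}, ∃ e : κ.ord.ToType → Ω,
      errors N I d.1.toWave ⊆ Set.range e := fun d =>
    exists_subset_range ((mk_le_mk_of_subset d.2.toIsStage.errors_subset).trans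
      (by simpa using d.2.mk_lt.le))
  choose e he using henum
  obtain ⟨f, hf⟩ := exists_forall_of_wellFoundedLT (D := {d // IsSmallStage N I hκ d})
    (fun i g d => (IsMin i → d.1 = d₀) ∧ ∀ j hj, Precedes N (g j hj).1 d.1.deleted ∧
      a ∈ d.1.deleted ∧ ((b i).1 = j → e (g j hj) (b i).2 ∈ persistentErrors N I hκ →
        e (g j hj) (b i).2 ∈ d.1.targets)) (by
    intro i g
    by_cases hi : IsMin i
    · exact ⟨⟨d₀, hd₀⟩, fun _ => rfl, fun j hj => absurd hj hi.not_lt⟩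
    obtain ⟨d, hd, hgd, had, hyd⟩ := exists_isSmallStage h (σ := Set.Iio i)
      (by simpa using mk_Iio_lt i) (fun j => (g j.1 j.2).2) a
      (if hj : (b i).1 < i then e (g _ hj) (b i).2 else a)
    refine ⟨⟨d, hd⟩, fun hi' => absurd hi' hi, fun j hj => ⟨hgd ⟨j, hj⟩, had, ?_⟩⟩
    rintro rfl
    simpa only [dif_pos hj] using hyd)
  refine ⟨fun i => (f i).1, ⟨fun i => (f i).2.toIsStage, fun hij => ((hf _).2 _ hij).1,
    fun i y hy => ?_⟩, ?_⟩
  · obtain ⟨n, rfl⟩ := he (f i) hy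
    obtain ⟨j, hij, hbj⟩ := hb (i, n)
    have := ((hf j).2 i hij).2.2
    rw [hbj] at this
    exact ⟨j, this rfl ((f i).2.errors_subset hy)⟩
  · have : Nonempty κ.ord.ToType := by
      rw [← mk_ne_zero_iff]
      simpa using hκ.ne_zero
    obtain ⟨i, -, hi⟩ := wellFounded_lt.has_min (Set.univ : Set κ.ord.ToType) Set.univ_nonempty
    have hfi : (f i).1 = d₀ := (hf i).1 fun j _ => not_lt.1 (hi j trivial)
    rw [← hfi] at haX haU
    exact ⟨i, a, ha, ⟨.inl haX, fun j hij => ((hf j).2 i hij).2.1⟩, haU⟩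

theorem Unhindered.eventually_union (hI : Unhindered N I) :
    ∀ᶠ M in clubFilter Ω hκ, Unhindered N (I ∪ M) := by
  by_contra h
  obtain ⟨f, hf, i, a, ha, hai, haU⟩ := exists_isTower (not_eventually.1 h)
  exact hf.not_unhindered ha hai haU hI

end SmallStage

end Web

/-! ### Linkability -/

namespace Web

open Cardinal Filter Order

section clubFilter

variable {Ω : Type w} {κ : Cardinal.{w}}

theorem frequently_clubFilter {hκ : κ.IsRegular} {P : Set Ω → Prop} :
    (∃ᶠ M in clubFilter Ω hκ, P M) ↔ ∀ F : Finset Ω → Set Ω, (∀ s, #(F s) < κ) →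
      ∃ M : Set Ω, #M < κ ∧ ClosedUnder F M ∧ P M := by
  simp only [Filter.Frequently, eventually_clubFilter, not_exists, not_and, not_forall, not_not,
    exists_prop]

theorem closedUnder_iUnion {ι : Type*} [Nonempty ι] [SemilatticeSup ι] {F : Finset Ω → Set Ω}
    {Z : ι → Set Ω} (hZ : Monotone Z)
    (h : ∃ᶠ i in atTop, ∃ j, ∀ s : Finset Ω, ↑s ⊆ Z i → F s ⊆ Z j) :
    ClosedUnder F (⋃ i, Z i) := by
  intro s hs
  obtain ⟨i, hi⟩ := hZ.directed_le.exists_mem_subset_of_finset_subset_biUnion hs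
  obtain ⟨k, hk, j, hj⟩ := frequently_atTop.1 h i
  exact (hj s (hi.trans (hZ hk))).trans (Set.subset_iUnion Z j)

theorem mk_iUnion_finset_subset_lt (hκ : κ.IsRegular) (hω : ℵ₀ < κ) {F : Finset Ω → Set Ω}
    (hF : ∀ s, #(F s) < κ) {B : Set Ω} (hB : #B < κ) :
    #(⋃ s ∈ {s : Finset Ω | ↑s ⊆ B}, F s : Set Ω) < κ := by
  classical
  refine (card_biUnion_lt_iff_forall_of_isRegular hκ ?_).2 fun s _ => hF s
  have hsurj : #{s : Finset Ω | ↑s ⊆ B} ≤ #(Finset B) :=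
    mk_le_of_surjective (f := fun s : Finset B =>
      ⟨s.map (Function.Embedding.subtype _), fun x hx => by
        obtain ⟨h, -⟩ := by simpa using hx
        exact h⟩) fun ⟨s, hs⟩ =>
        ⟨s.subtype (· ∈ B), Subtype.ext (Finset.subtype_map_of_mem hs)⟩
  refine hsurj.trans_lt ?_
  rcases finite_or_infinite B with h | h
  · exact (lt_aleph0_of_finite _).trans hω
  · rwa [mk_finset_of_infinite]

theorem mk_iUnion_nat_lt (hκ : κ.IsRegular) (hω : ℵ₀ < κ) {Z : ℕ → Set Ω} (hZ : ∀ n, #(Z n) < κ) :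
    #(⋃ n, Z n) < κ := by
  rw [← Equiv.ulift.{w}.surjective.iUnion_comp Z]
  exact (card_iUnion_lt_iff_forall_of_isRegular hκ (by simpa using hω)).2 fun _ => hZ _

theorem neBot_clubFilter (hκ : κ.IsRegular) (hω : ℵ₀ < κ) : (clubFilter Ω hκ).NeBot := by
  rw [← frequently_true_iff_neBot, frequently_clubFilter]
  intro F hF
  let c : Set Ω → Set Ω := fun B => B ∪ ⋃ s ∈ {s : Finset Ω | ↑s ⊆ B}, F s
  have hc : Monotone fun n => c^[n] ∅ := fun m n hmn =>
    Function.monotone_iterate_of_id_le (f := c) (fun B => Set.subset_union_left) hmn ∅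
  refine ⟨⋃ n, c^[n] ∅, mk_iUnion_nat_lt hκ hω fun n => ?_,
    closedUnder_iUnion hc ?_, trivial⟩
  · induction n with
    | zero => simpa using hκ.pos
    | succ n ih =>
      rw [Function.iterate_succ_apply']
      exact mk_union_lt hω.le ih (mk_iUnion_finset_subset_lt hκ hω hF ih)
  · refine .of_forall fun n => ⟨n + 1, fun s hs => ?_⟩
    rw [Function.iterate_succ_apply']
    exact (Set.subset_biUnion_of_mem hs).trans Set.subset_union_right

theorem exists_iUnion_eq_of_mk_le_sum {ι : Type w} {θ : ι → Cardinal.{w}} {s : Set Ω}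
    (h : #s ≤ Cardinal.sum θ) : ∃ E : ι → Set Ω, (∀ i, #(E i) ≤ θ i) ∧ s = ⋃ i, E i := by
  obtain ⟨g⟩ : #s ≤ #(Σ i, (θ i).out) := h
  refine ⟨fun i => Subtype.val '' {x | (g x).1 = i}, fun i => ?_, by ext; simp⟩
  refine mk_image_le.trans ?_
  calc #{x | (g x).1 = i} ≤ #{p : Σ i, (θ i).out // p.1 = i} :=
        mk_le_of_injective (f := fun x => ⟨g x.1, x.2⟩) fun x y hxy =>
          Subtype.ext (g.injective (congrArg Subtype.val hxy))
    _ = θ i := by rw [mk_congr (Equiv.sigmaSubtype i), mk_out]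

theorem exists_iUnion_sequence {ι : Type*} [LT ι] [WellFoundedLT ι] (R : ι → Set Ω → Set Ω → Prop)
    (h : ∀ i (Z : ι → Set Ω), (∀ j < i, R j (⋃ l < j, Z l) (Z j)) → ∃ Y, R i (⋃ l < i, Z l) Y) :
    ∃ Z : ι → Set Ω, ∀ i, R i (⋃ l < i, Z l) (Z i) := by
  classical
  obtain ⟨Z, hZ⟩ := exists_forall_of_wellFoundedLT (D := Set Ω) (fun i g d =>
    (∃ Y, R i (⋃ (l) (hl : l < i), g l hl) Y) → R i (⋃ (l) (hl : l < i), g l hl) d)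
    fun i g => by
      by_cases hY : ∃ Y, R i (⋃ (l) (hl : l < i), g l hl) Y
      · exact hY.imp fun Y hY _ => hY
      · exact ⟨∅, fun h => absurd h hY⟩
  exact ⟨Z, fun i => WellFoundedLT.induction i fun j ih => hZ j (h j Z ih)⟩

end clubFilter

variable {Ω : Type w} {N : Web Ω} {I : Set Ω}

/-- The sources of `N - I` in `Z` have disjoint crossings inside `Z \ I`. -/
def Linkable (N : Web Ω) (I Z : Set Ω) : Prop :=
  ∃ Q : Ω → Set Ω, (∀ a ∈ N.source ∩ (Z \ I), a ∈ Q a ∧ IsCrossing N a (Q a) ∧ Q a ⊆ Z \ I) ∧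
    (N.source ∩ (Z \ I)).PairwiseDisjoint Q

namespace Linkable

theorem mono {Y Z : Set Ω} (h : Linkable N I Y) (hYZ : Y ⊆ Z) (hZ : N.source ∩ (Z \ I) ⊆ Y) :
    Linkable N I Z := by
  obtain ⟨Q, hQ, hdisj⟩ := h
  refine ⟨Q, fun a ha => ?_, hdisj.subset fun a ha => ⟨ha.1, hZ ha, ha.2.2⟩⟩
  obtain ⟨haQ, hcr, hsub⟩ := hQ a ⟨ha.1, hZ ha, ha.2.2⟩
  exact ⟨haQ, hcr, hsub.trans (Set.sdiff_subset_sdiff_left hYZ)⟩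

theorem of_disjoint {Z : Set Ω} (h : N.source ∩ (Z \ I) = ∅) : Linkable N I Z :=
  ⟨fun _ => ∅, by simp [h], by simp [h]⟩

theorem of_isCrossing {a : Ω} {S : Set Ω} (haS : a ∈ S) (hS : IsCrossing N a S)
    (hSI : Disjoint S I) : Linkable N I S := by
  have hsub : N.source ∩ (S \ I) ⊆ {a} := fun x hx => hS.inter_source_subset ⟨hx.2.1, hx.1⟩
  refine ⟨fun _ => S, fun b hb => ?_, (Set.subsingleton_singleton.anti hsub).pairwise _⟩
  obtain rfl := hsub hb
  exact ⟨haS, hS, Set.subset_sdiff.2 ⟨subset_rfl, hSI⟩⟩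

theorem iUnion {ι : Type*} [LinearOrder ι] [WellFoundedLT ι] {Z : ι → Set Ω}
    (h : ∀ i, Linkable N (I ∪ ⋃ j < i, Z j) (Z i)) : Linkable N I (⋃ i, Z i) := by
  choose Q hQ hdisj using h
  rcases isEmpty_or_nonempty ι with hι | hι
  · exact of_disjoint (by simp)
  have hindex : ∀ a ∈ N.source ∩ ((⋃ i, Z i) \ I),
      ∃ i, a ∈ N.source ∩ (Z i \ (I ∪ ⋃ j < i, Z j)) := by
    rintro a ⟨ha, haZ, haI⟩
    obtain ⟨i, hi, hmin⟩ := wellFounded_lt.has_min {i | a ∈ Z i} (Set.mem_iUnion.1 haZ)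
    refine ⟨i, ha, hi, ?_⟩
    simp only [Set.mem_union, Set.mem_iUnion, not_or, not_exists]
    exact ⟨haI, fun j hj haj => hmin j haj hj⟩
  choose! i hi using hindex
  have hsub : ∀ a ∈ N.source ∩ ((⋃ i, Z i) \ I), ∀ b ∈ N.source ∩ ((⋃ i, Z i) \ I), i a < i b →
      Disjoint (Q (i a) a) (Q (i b) b) := fun a ha b hb hab => by
    refine Set.disjoint_left.2 fun x hxa hxb => ((hQ _ b (hi b hb)).2.2 hxb).2 (.inr ?_)
    exact Set.mem_biUnion hab ((hQ _ a (hi a ha)).2.2 hxa).1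
  refine ⟨fun a => Q (i a) a, fun a ha => ?_, fun a ha b hb hab => ?_⟩
  · obtain ⟨haQ, hcr, hsub⟩ := hQ _ a (hi a ha)
    exact ⟨haQ, hcr, hsub.trans (Set.sdiff_subset_sdiff (Set.subset_iUnion Z _)
      Set.subset_union_left)⟩
  · rcases lt_trichotomy (i a) (i b) with h | h | h
    · exact hsub a ha b hb h
    · simpa only [Function.onFun, h] using hdisj (i b) (h ▸ hi a ha) (hi b hb) hab
    · exact (hsub b hb a ha h).symm

end Linkable

theorem Unhindered.exists_linkable (hI : Unhindered N I) (a : Ω) :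
    ∃ Z : Set Ω, Z.Finite ∧ (a ∈ N.source → a ∈ I ∪ Z) ∧ Unhindered N (I ∪ Z) ∧
      Linkable N I Z := by
  by_cases ha : a ∈ N.source ∧ a ∉ I
  · obtain ⟨S, haS, hS, hSI, hIS⟩ := hI.exists_isCrossing ha.1 ha.2
    exact ⟨S, hS.finite, fun _ => .inr haS, hIS, .of_isCrossing haS hS hSI⟩
  · exact ⟨∅, Set.finite_empty, by simpa using ha, by simpa using hI, .of_disjoint (by simp)⟩

variable {κ : Cardinal.{w}}

theorem eventually_exists_linkable (hκ : κ.IsRegular) :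
    ∀ᶠ M in clubFilter Ω hκ, ∀ a ∈ M, ∀ B ⊆ M, B.Finite → Unhindered N (I ∪ B) →
      ∃ Z ⊆ M, Z.Finite ∧ (a ∈ N.source → a ∈ I ∪ B ∪ Z) ∧ Unhindered N (I ∪ B ∪ Z) ∧
        Linkable N (I ∪ B) Z := by
  have hex : ∀ (a : Ω) (B : Finset Ω), ∃ Z : Set Ω, Z.Finite ∧ (Unhindered N (I ∪ B) →
      (a ∈ N.source → a ∈ I ∪ B ∪ Z) ∧ Unhindered N (I ∪ B ∪ Z) ∧ Linkable N (I ∪ B) Z) := by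
    intro a B
    by_cases hB : Unhindered N (I ∪ B)
    · obtain ⟨Z, hZ, h⟩ := hB.exists_linkable a
      exact ⟨Z, hZ, fun _ => h⟩
    · exact ⟨∅, Set.finite_empty, fun h => absurd h hB⟩
  choose Z hZ h using hex
  have hclosed : ∀ a, ∀ᶠ M in clubFilter Ω hκ, ClosedUnder (Z a) M := fun a =>
    ⟨Z a, fun B => (hZ a B).lt_aleph0.trans_le hκ.aleph0_le, fun _ _ h => h⟩
  filter_upwards [eventually_forall_mem hκ hclosed] with M hM a ha B hBM hB hIB
  lift B to Finset Ω using hB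
  exact ⟨Z a B, hM a ha B hBM, hZ a B, h a B hIB⟩

theorem Unhindered.exists_linkable_iUnion_nat (hI : Unhindered N I) {p : Set Ω → Prop} (hp : p ∅)
    {R : ℕ → Set Ω → Set Ω → Prop} (h : ∀ n B, p B → Unhindered N (I ∪ B) → ∃ Z, p (B ∪ Z) ∧
      Unhindered N (I ∪ B ∪ Z) ∧ Linkable N (I ∪ B) Z ∧ R n B Z) :
    ∃ Z : ℕ → Set Ω, (∀ n, p (⋃ k < n, Z k)) ∧ (∀ n, R n (⋃ k < n, Z k) (Z n)) ∧
      Linkable N I (⋃ n, Z n) := by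
  obtain ⟨Z, hZ⟩ := exists_iUnion_sequence (ι := ℕ) (fun n B Z => (p B ∧ Unhindered N (I ∪ B)) ∧
    p (B ∪ Z) ∧ Unhindered N (I ∪ B ∪ Z) ∧ Linkable N (I ∪ B) Z ∧ R n B Z) (by
      intro n Z hZ
      have hB : p (⋃ k < n, Z k) ∧ Unhindered N (I ∪ ⋃ k < n, Z k) := by
        cases n with
        | zero => simpa using ⟨hp, hI⟩
        | succ n =>
          rw [Set.biUnion_lt_succ, ← Set.union_assoc]
          exact ⟨(hZ n n.lt_succ_self).2.1, (hZ n n.lt_succ_self).2.2.1⟩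
      obtain ⟨Y, hY⟩ := h n _ hB.1 hB.2
      exact ⟨Y, hB, hY⟩)
  exact ⟨Z, fun n => (hZ n).1.1, fun n => (hZ n).2.2.2.2, .iUnion fun n => (hZ n).2.2.2.1⟩

theorem Unhindered.eventually_linkable_aleph_one (hI : Unhindered N I) :
    ∀ᶠ M in clubFilter Ω isRegular_aleph_one, Linkable N I M := by
  filter_upwards [eventually_exists_linkable (N := N) (I := I) isRegular_aleph_one,
    eventually_mk_lt isRegular_aleph_one] with M hM hcard
  rcases M.eq_empty_or_nonempty with rfl | hne
  · exact .of_disjoint (by simp)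
  obtain ⟨e, rfl⟩ := (le_aleph0_iff_set_countable.1 (by simpa using hcard)).exists_eq_range hne
  obtain ⟨Z, hp, hZ, hlink⟩ := hI.exists_linkable_iUnion_nat
    (p := fun B => B ⊆ Set.range e ∧ B.Finite) (by simp)
    (R := fun n B Z => e n ∈ N.source → e n ∈ I ∪ B ∪ Z) (by
      rintro n B ⟨hBM, hB⟩ hIB
      obtain ⟨Z, hZM, hZ, ha, hIZ, hlink⟩ := hM _ ⟨n, rfl⟩ B hBM hB hIB
      exact ⟨Z, ⟨Set.union_subset hBM hZM, hB.union hZ⟩, hIZ, hlink, ha⟩)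
  have hmem : ∀ n, Z n ⊆ ⋃ k < n + 1, Z k := fun n => Set.subset_biUnion_of_mem n.lt_succ_self
  refine hlink.mono (Set.iUnion_subset fun n => (hmem n).trans (hp (n + 1)).1) ?_
  rintro _ ⟨ha, ⟨n, rfl⟩, haI⟩
  rcases hZ n ha with (h | h) | h
  · exact absurd h haI
  · exact Set.iUnion₂_subset_iUnion _ _ h
  · exact Set.mem_iUnion_of_mem n h

/-- Among the sets of size `< κ`, the linkable ones are stationary. -/
def OftenLinkable (N : Web Ω) (hκ : κ.IsRegular) : Prop :=
  ∀ I, Unhindered N I → ∃ᶠ Z in clubFilter Ω hκ, Linkable N I Z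

theorem oftenLinkable_aleph_one (N : Web Ω) : OftenLinkable N isRegular_aleph_one := fun _ hI =>
  have := neBot_clubFilter (Ω := Ω) isRegular_aleph_one aleph0_lt_aleph_one
  hI.eventually_linkable_aleph_one.frequently

theorem oftenLinkable_of_forall_succ (hκ : κ.IsRegular) (hω : ℵ₀ < κ)
    (hlim : ∀ ν < κ, succ ν < κ)
    (h : ∀ ν (hν : ℵ₀ ≤ ν), ν < κ → OftenLinkable N (isRegular_succ hν)) : OftenLinkable N hκ := by
  intro I hI
  refine frequently_clubFilter.2 fun F hF => ?_
  obtain ⟨Z, hp, hZ, hlink⟩ := hI.exists_linkable_iUnion_nat (p := fun B => #B < κ)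
    (by simpa using hκ.pos) (R := fun _ B Z => ⋃ s ∈ {s : Finset Ω | ↑s ⊆ B}, F s ⊆ Z) (by
      intro _ B hB hIB
      have hFB := mk_iUnion_finset_subset_lt hκ hω hF hB
      have hν := le_max_left ℵ₀ (max #B #(⋃ s ∈ {s : Finset Ω | ↑s ⊆ B}, F s : Set Ω))
      have hνκ := max_lt hω (max_lt hB hFB)
      obtain ⟨Z, hlink, hBZ, hFZ, hZ, hIZ⟩ := ((h _ hν hνκ (I ∪ B) hIB).and_eventually
        ((eventually_superset _ (lt_succ_iff.2 (le_max_of_le_right (le_max_left _ _)))).and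
        ((eventually_superset _ (lt_succ_iff.2 (le_max_of_le_right (le_max_right _ _)))).and
        ((eventually_mk_lt _).and hI.eventually_union)))).exists
      exact ⟨Z, mk_union_lt hω.le hB (hZ.trans (hlim _ hνκ)),
        by rwa [Set.union_assoc, Set.union_eq_self_of_subset_left hBZ], hlink, hFZ⟩)
  have hmem : ∀ n, Z n ⊆ ⋃ k < n + 1, Z k := fun n => Set.subset_biUnion_of_mem n.lt_succ_self
  refine ⟨_, mk_iUnion_nat_lt hκ hω fun n => (mk_le_mk_of_subset (hmem n)).trans_lt (hp (n + 1)),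
    ?_, hlink⟩
  have haccum : ⋃ n, ⋃ k < n, Z k = ⋃ n, Z n :=
    Set.Subset.antisymm (Set.iUnion_subset fun _ => Set.iUnion₂_subset_iUnion _ _)
      (Set.iUnion_subset fun n => (hmem n).trans (Set.subset_iUnion (fun n => ⋃ k < n, Z k) _))
  rw [← haccum]
  exact closedUnder_iUnion
    (fun m n hmn => Set.biUnion_subset_biUnion_left fun k hk => lt_of_lt_of_le hk hmn)
    (.of_forall fun n => ⟨n + 1, fun s hs => (Set.subset_biUnion_of_mem hs).trans
      ((hZ n).trans (hmem n))⟩)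

end Web

namespace Web

open Cardinal Filter Order

variable {Ω : Type w} {N : Web Ω} {I : Set Ω}

section filtration

variable {ι : Type w} [LinearOrder ι] {μ : Cardinal.{w}} {κ θ : ι → Cardinal.{w}}

/-- A scheme exhausting a set of size `μ` by pieces of sizes `θ i`, collected step by step into
sets of size less than the regular cardinal `κ i ≤ μ`. -/
structure IsExhaustion (μ : Cardinal.{w}) (κ θ : ι → Cardinal.{w}) : Prop where
  isRegular : ∀ i, (κ i).IsRegular
  monotone : Monotone κ
  le : ∀ i, κ i ≤ μ
  mk_le : #ι ≤ μ
  mk_Iic_lt : ∀ i, #(Set.Iic i) < κ i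
  lt : ∀ i, θ i < κ i
  le_sum : μ ≤ Cardinal.sum θ

theorem subset_of_iUnion_lt_subset {Z : ι → Set Ω} {i j : ι} (h : ⋃ l < j, Z l ⊆ Z j)
    (hij : i ≤ j) : Z i ⊆ Z j := by
  rcases hij.eq_or_lt with rfl | hij
  · rfl
  · exact (Set.subset_iUnion₂ (s := fun l (_ : l < j) => Z l) i hij).trans h

theorem exists_closedUnder_iUnion {F : Finset Ω → Set Ω} (hF : ∀ s, #(F s) ≤ Cardinal.sum θ) :
    ∃ E : ι → Finset Ω → Set Ω, (∀ i s, #(E i s) ≤ θ i) ∧ ∀ Z : ι → Set Ω, Monotone Z →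
      (∀ i, ∀ j ≤ i, ClosedUnder (E j) (Z i)) → ClosedUnder F (⋃ i, Z i) := by
  choose E hE hFE using fun s => exists_iUnion_eq_of_mk_le_sum (hF s)
  refine ⟨fun i s => E s i, fun i s => hE s i, fun Z hmono hZ s hs => ?_⟩
  rw [hFE]
  refine Set.iUnion_subset fun j => ?_
  have : Nonempty ι := ⟨j⟩
  refine closedUnder_iUnion (F := fun s => E s j) hmono (Eventually.frequently ?_) s hs
  filter_upwards [eventually_ge_atTop j] with i hij using ⟨i, hZ i j hij⟩

variable [WellFoundedLT ι]

theorem IsExhaustion.exists_iUnion (hμ : IsExhaustion μ κ θ) {E : ι → Finset Ω → Set Ω}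
    (hE : ∀ i s, #(E i s) ≤ θ i) {P : ι → Set Ω → Prop}
    (hP : ∀ i, ∀ᶠ Z in clubFilter Ω (hμ.isRegular i), P i Z)
    (hlink : ∀ i, OftenLinkable N (hμ.isRegular i))
    (hU : ∀ i (Z : Set.Iio i → Set Ω), Monotone Z → (∀ l, P l.1 (Z l)) →
      Unhindered N (I ∪ ⋃ l, Z l)) :
    ∃ Z : ι → Set Ω, Monotone Z ∧ Linkable N I (⋃ i, Z i) ∧
      ∀ i, #(Z i) < κ i ∧ ∀ j ≤ i, ClosedUnder (E j) (Z i) := by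
  obtain ⟨Z, hZ⟩ := exists_iUnion_sequence (ι := ι) (fun i B Z => B ⊆ Z ∧ #Z < κ i ∧
    Linkable N (I ∪ B) Z ∧ P i Z ∧ ∀ j ≤ i, ClosedUnder (E j) Z) (by
      intro i Z hZ
      have hκ := hμ.isRegular i
      have hB : #(⋃ l < i, Z l : Set Ω) < κ i :=
        (card_biUnion_lt_iff_forall_of_isRegular hκ
          ((mk_le_mk_of_subset Set.Iio_subset_Iic_self).trans_lt (hμ.mk_Iic_lt i))).2
          fun l hl => (hZ l hl).2.1.trans_le (hμ.monotone (le_of_lt hl))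
      have hIB : Unhindered N (I ∪ ⋃ l < i, Z l) := by
        rw [show ⋃ l < i, Z l = ⋃ l : Set.Iio i, Z l from Set.biUnion_eq_iUnion _ _]
        exact hU i _ (fun l k hlk => subset_of_iUnion_lt_subset (hZ k k.2).1 hlk)
          fun l => (hZ l l.2).2.2.2.1
      have hcl : ∀ᶠ Z in clubFilter Ω hκ, ∀ j ≤ i, ClosedUnder (E j) Z :=
        (eventually_cardinal_ball (hμ.mk_Iic_lt i)).2 fun j hj => ⟨E j, fun s =>
          ((hE j s).trans_lt (hμ.lt j)).trans_le (hμ.monotone hj), fun _ _ h => h⟩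
      obtain ⟨Y, hY, hBY, hYκ, hPY, hcl⟩ :=
        ((hlink i _ hIB).and_eventually
          ((eventually_superset hκ hB).and ((eventually_mk_lt hκ).and ((hP i).and hcl)))).exists
      exact ⟨Y, hBY, hYκ, hY, hPY, hcl⟩)
  exact ⟨Z, fun l k => subset_of_iUnion_lt_subset (hZ k).1, .iUnion fun i => (hZ i).2.2.1,
    fun i => ⟨(hZ i).2.1, (hZ i).2.2.2.2⟩⟩

theorem IsExhaustion.frequently_linkable (hμ : IsExhaustion μ κ θ) (hω : ℵ₀ ≤ μ)
    {P : ι → Set Ω → Prop} (hP : ∀ i, ∀ᶠ Z in clubFilter Ω (hμ.isRegular i), P i Z)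
    (hlink : ∀ i, OftenLinkable N (hμ.isRegular i))
    (hU : ∀ i (Z : Set.Iio i → Set Ω), Monotone Z → (∀ l, P l.1 (Z l)) →
      Unhindered N (I ∪ ⋃ l, Z l)) :
    ∃ᶠ Z in clubFilter Ω (isRegular_succ hω), Linkable N I Z := by
  refine frequently_clubFilter.2 fun F hF => ?_
  obtain ⟨E, hE, hFE⟩ := exists_closedUnder_iUnion fun s =>
    (lt_succ_iff.1 (hF s)).trans hμ.le_sum
  obtain ⟨Z, hmono, hZ, hcl⟩ := hμ.exists_iUnion hE hP hlink hU
  refine ⟨⋃ i, Z i, ?_, hFE Z hmono fun i => (hcl i).2, hZ⟩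
  exact (card_iUnion_lt_iff_forall_of_isRegular (isRegular_succ hω)
    (lt_succ_iff.2 hμ.mk_le)).2 fun i => lt_succ_iff.2 ((hcl i).1.le.trans (hμ.le i))

end filtration

variable {μ : Cardinal.{w}}

theorem isExhaustion_of_isRegular (hμ : μ.IsRegular) :
    IsExhaustion μ (fun _ : μ.ord.ToType => μ) fun _ => 1 where
  isRegular _ := hμ
  monotone := monotone_const
  le _ := le_rfl
  mk_le := by simp
  mk_Iic_lt := mk_Iic_toType_lt hμ.aleph0_le
  lt _ := one_lt_aleph0.trans_le hμ.aleph0_le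
  le_sum := by simp

theorem OftenLinkable.succ_of_isRegular {hμ : μ.IsRegular} (h : OftenLinkable N hμ) :
    OftenLinkable N (isRegular_succ hμ.aleph0_le) := by
  intro I hI
  obtain ⟨f, hf, hIf⟩ := (eventually_clubFilter hμ).1 hI.eventually_union
  refine (isExhaustion_of_isRegular hμ).frequently_linkable hμ.aleph0_le
    (P := fun _ Z => #Z < μ ∧ ClosedUnder f Z)
    (fun _ => (eventually_mk_lt hμ).and ⟨f, hf, fun _ _ h => h⟩) (fun _ => h) fun i Z hmono hZ => ?_
  rcases isEmpty_or_nonempty (Set.Iio i) with hi | hi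
  · simpa using hI
  · refine hIf _ ?_ (closedUnder_iUnion hmono (.of_forall fun l => ⟨l, (hZ l).2⟩))
    exact (card_iUnion_lt_iff_forall_of_isRegular hμ (by simpa using mk_Iio_lt i)).2
      fun l => (hZ l).1

theorem Unhindered.exists_forall_union_of_closedUnder (hI : Unhindered N I) {ι : Type w}
    [LinearOrder ι] {θ : ι → Cardinal.{w}} (hθ : ∀ i, ℵ₀ ≤ θ i) :
    ∃ e : ι → Finset Ω → Set Ω, (∀ i s, #(e i s) ≤ θ i) ∧ ∀ Z : ι → Set Ω, Monotone Z →
      (∀ i, #(Z i) ≤ θ i) → (∀ i, ∀ j ≤ i, ClosedUnder (e j) (Z i)) →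
        Unhindered N (I ∪ ⋃ i, Z i) := by
  rcases isEmpty_or_nonempty ι with hι | ⟨⟨i⟩⟩
  · exact ⟨fun _ _ => ∅, by simp, by simpa using fun _ _ => hI⟩
  obtain ⟨f, hf, hIf⟩ := (eventually_clubFilter
    (isRegular_succ ((hθ i).trans (le_sum θ i)))).1 hI.eventually_union
  obtain ⟨e, he, hfe⟩ := exists_closedUnder_iUnion fun s => lt_succ_iff.1 (hf s)
  refine ⟨e, he, fun Z hmono hZ hcl => hIf _ ?_ (hfe Z hmono hcl)⟩
  exact lt_succ_iff.2 (mk_iUnion_le_sum_mk.trans (sum_le_sum _ _ hZ))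

theorem exists_isExhaustion_of_isSingular (hμ : μ.IsSingular) :
    ∃ (ι : Type w) (_ : LinearOrder ι) (_ : WellFoundedLT ι) (θ : ι → Cardinal.{w}),
      (∀ i, ℵ₀ ≤ θ i) ∧ (∀ i, #ι ≤ θ i) ∧ IsExhaustion μ (fun i => succ (θ i)) θ := by
  obtain ⟨S, hS, hSμ⟩ := Order.exists_cof_eq μ.ord.ToType
  rw [Ordinal.cof_toType] at hSμ
  have hcof : ℵ₀ ≤ μ.ord.cof := Ordinal.aleph0_le_cof_iff.2
    (Ordinal.one_lt_cof_iff.2 (isSuccLimit_ord hμ.aleph0_le))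
  have hSle : ∀ i : S, #S ≤ max #S #(Set.Iic i.1) := fun i => le_max_left _ _
  have hω : ∀ i : S, ℵ₀ ≤ max #S #(Set.Iic i.1) := fun i => (hcof.trans hSμ.ge).trans (hSle i)
  refine ⟨S, inferInstance, inferInstance, fun i => max #S #(Set.Iic i.1), hω, hSle,
    { isRegular i := isRegular_succ (hω i)
      monotone i j hij := succ_le_succ
        (max_le_max_left _ (mk_le_mk_of_subset (Set.Iic_subset_Iic.2 hij)))
      le i := succ_le_of_lt (max_lt (hSμ.trans_lt hμ.cof_ord_lt)
        (mk_Iic_toType_lt hμ.aleph0_le _))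
      mk_le := (hSμ.trans_lt hμ.cof_ord_lt).le
      mk_Iic_lt i := lt_succ_iff.2 ((mk_set_le _).trans (hSle i))
      lt i := lt_succ _
      le_sum := ?_ }⟩
  calc μ = #(⋃ i ∈ S, Set.Iic i) := by rw [isCofinal_iff_iUnion_Iic_eq_univ.1 hS]; simp
    _ ≤ Cardinal.sum fun i : S => #(Set.Iic i.1) := by
      rw [Set.biUnion_eq_iUnion]
      exact mk_iUnion_le_sum_mk
    _ ≤ _ := sum_le_sum _ _ fun i => le_max_right _ _

theorem oftenLinkable_succ_of_isSingular (hμ : μ.IsSingular)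
    (h : ∀ ν (hν : ℵ₀ ≤ ν), ν < μ → OftenLinkable N (isRegular_succ hν)) :
    OftenLinkable N (isRegular_succ hμ.aleph0_le) := by
  intro I hI
  obtain ⟨ι, _, _, θ, hθ, hι, hex⟩ := exists_isExhaustion_of_isSingular hμ
  choose e he hIe using fun j : ι =>
    hI.exists_forall_union_of_closedUnder (θ := fun l : Set.Iio j => θ l) fun l => hθ l
  refine hex.frequently_linkable hμ.aleph0_le
    (P := fun i Z => #Z ≤ θ i ∧ ∀ j, ∀ l : Set.Iio j, l.1 ≤ i → ClosedUnder (e j l) Z)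
    (fun i => ?_) (fun i => h _ (hθ i) ((lt_succ _).trans_le (hex.le i)))
    fun i Z hmono hZ => hIe i Z hmono (fun l => (hZ l).1) fun l k hkl => (hZ l).2 i k hkl
  refine ((eventually_mk_lt (hex.isRegular i)).mono fun _ => lt_succ_iff.1).and ?_
  have hιi := lt_succ_iff.2 (hι i)
  refine (eventually_cardinal_forall hιi).2 fun j =>
    (eventually_cardinal_forall ((mk_set_le _).trans_lt hιi)).2 fun l =>
      eventually_imp_distrib_left.2 fun hli => ⟨e j l, fun s => ?_, fun _ _ h => h⟩
  exact ((he j l s).trans_lt (lt_succ _)).trans_le (hex.monotone hli)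

theorem oftenLinkable {κ : Cardinal.{w}} (hκ : κ.IsRegular) (hω : ℵ₀ < κ) :
    OftenLinkable N hκ := by
  induction κ using WellFoundedLT.induction with
  | ind κ ih =>
  by_cases hlim : ∀ ν < κ, succ ν < κ
  · exact oftenLinkable_of_forall_succ hκ hω hlim fun ν hν hνκ =>
      ih _ (hlim ν hνκ) _ (hν.trans_lt (lt_succ ν))
  push Not at hlim
  obtain ⟨μ, hμκ, hκμ⟩ := hlim
  obtain rfl : κ = succ μ := hκμ.antisymm (succ_le_of_lt hμκ)
  have hμ : ℵ₀ ≤ μ := lt_succ_iff.1 hω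
  rcases hμ.eq_or_lt with rfl | hωμ
  · convert oftenLinkable_aleph_one N
    exact succ_aleph0
  rcases isRegular_or_isSingular hμ with hreg | hsing
  · exact (ih μ hμκ hreg hωμ).succ_of_isRegular
  · exact oftenLinkable_succ_of_isSingular hsing fun ν hν hνμ =>
      ih _ (succ_lt_succ hνμ) _ (hν.trans_lt (lt_succ ν))

theorem Unhindered.linkable_univ (hI : Unhindered N I) : Linkable N I Set.univ := by
  have hω : ℵ₀ ≤ max ℵ₀ #Ω := le_max_left _ _
  obtain ⟨Z, hZ, hΩ⟩ := ((oftenLinkable (isRegular_succ hω) (hω.trans_lt (lt_succ _)) I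
    hI).and_eventually (eventually_superset (B := Set.univ) _ (by
      rw [mk_univ]
      exact (le_max_right _ _).trans_lt (lt_succ _)))).exists
  rwa [Set.univ_subset_iff.1 hΩ] at hZ

end Web

/-! ### The edge web of a multigraph -/

namespace Multigraph

variable {V : Type u} {E : Type v} {G : Multigraph V E} {s t u w x y : V} {e : E} {X : Set V}
  {C F : Set E}

theorem inc_eq_of_mem (hx : x ∈ G.inc e) (hy : y ∈ G.inc e) (h : x ≠ y) : G.inc e = s(x, y) :=
  (Sym2.mem_and_mem_iff h).1 ⟨hx, hy⟩

theorem mem_cut_iff (he : G.inc e = s(x, y)) : e ∈ G.cut X ↔ ¬ (x ∈ X ↔ y ∈ X) := by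
  simp only [cut, he, Set.mem_ofPred_eq, Sym2.eq_iff]
  grind

theorem cut_compl (X : Set V) : G.cut Xᶜ = G.cut X := by
  ext e
  induction h : G.inc e with | _ x y =>
  simp only [mem_cut_iff h, Set.mem_compl_iff, not_iff_not]

theorem inci_eq_cut (s : V) : G.inci s = G.cut {s} := by
  ext e
  have hne := G.not_isDiag e
  induction h : G.inc e with | _ x y =>
  rw [h, Sym2.mk_isDiag_iff] at hne
  simp only [mem_cut_iff h, inci, h, Set.mem_ofPred_eq, Sym2.mem_iff, Set.mem_singleton_iff]
  grind

namespace Walk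

theorem end_mem_support (p : G.Walk u w) : w ∈ p.support := by
  induction p with
  | nil => exact List.mem_singleton_self _
  | cons _ _ _ ih => exact List.mem_cons_of_mem _ ih

theorem mem_of_mem_support (p : G.Walk u w) (hp : ∀ e ∈ p.edges, e ∉ G.cut X) (hu : u ∈ X) :
    ∀ x ∈ p.support, x ∈ X := by
  induction p with
  | nil => simpa only [support, List.mem_singleton, forall_eq] using hu
  | cons e he p ih =>
    simp only [edges, List.forall_mem_cons, mem_cut_iff he, not_not] at hp
    simp only [support, List.forall_mem_cons]
    exact ⟨hu, ih hp.2 (hp.1.1 hu)⟩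

theorem exists_mem_edges_mem_cut (p : G.Walk u w) (hu : u ∈ X) (hw : w ∉ X) :
    ∃ e ∈ p.edges, e ∈ G.cut X := by
  by_contra! h
  exact hw (p.mem_of_mem_support h hu _ p.end_mem_support)

theorem notMem_cut_of_support (p : G.Walk u w) (hp : ∀ x ∈ p.support, x ∈ X) :
    ∀ e ∈ p.edges, e ∉ G.cut X := by
  induction p with
  | nil => simp only [edges, List.not_mem_nil, false_implies, implies_true]
  | @cons u v w e he p ih =>
    simp only [support, List.forall_mem_cons] at hp
    have hv : v ∈ p.support := by cases p <;> exact List.mem_cons_self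
    simp only [edges, List.forall_mem_cons, mem_cut_iff he, not_not]
    exact ⟨iff_of_true hp.1 (hp.2 v hv), ih hp.2⟩

theorem exists_cons_of_mem (hx : x ∈ G.inc e) (hu : u ∈ G.inc e) (p : G.Walk u w) :
    ∃ q : G.Walk x w, q.edges ⊆ e :: p.edges := by
  by_cases hxu : x = u
  · subst hxu
    exact ⟨p, List.subset_cons_self _ _⟩
  · exact ⟨.cons e (inc_eq_of_mem hx hu hxu) p, List.Subset.refl _⟩

theorem exists_concat_of_mem (p : G.Walk u x) (hx : x ∈ G.inc e) (hw : w ∈ G.inc e) :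
    ∃ q : G.Walk u w, q.edges ⊆ e :: p.edges := by
  induction p with
  | nil => exact exists_cons_of_mem hx hw (.nil w)
  | cons f hf p ih =>
    obtain ⟨q, hq⟩ := ih hx
    refine ⟨.cons f hf q, ?_⟩
    simp only [edges]
    grind

theorem exists_suffix (p : G.Walk u w) (hx : x ∈ p.support) :
    ∃ q : G.Walk x w, q.support.Sublist p.support ∧ q.edges ⊆ p.edges := by
  induction p with
  | nil =>
    obtain rfl := List.mem_singleton.1 hx
    exact ⟨.nil x, .refl _, List.Subset.refl _⟩
  | cons e he p ih =>
    rcases List.mem_cons.1 hx with rfl | hx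
    · exact ⟨.cons e he p, .refl _, List.Subset.refl _⟩
    · obtain ⟨q, hqs, hqe⟩ := ih hx
      exact ⟨q, hqs.cons _, List.subset_cons_of_subset _ hqe⟩

theorem exists_bypass (p : G.Walk u w) :
    ∃ q : G.Walk u w, q.support.Nodup ∧ q.edges ⊆ p.edges := by
  induction p with
  | nil v => exact ⟨.nil v, List.nodup_singleton v, List.Subset.refl _⟩
  | @cons u v w e he p ih =>
    obtain ⟨q, hq, hqp⟩ := ih
    by_cases hu : u ∈ q.support
    · obtain ⟨r, hrq, hrq'⟩ := q.exists_suffix hu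
      exact ⟨r, hq.sublist hrq, List.subset_cons_of_subset _ (List.Subset.trans hrq' hqp)⟩
    · exact ⟨.cons e he q, List.nodup_cons.2 ⟨hu, hq⟩, List.cons_subset_cons _ hqp⟩

theorem exists_prefix (p : G.Walk u w) (he : e ∈ p.edges) :
    ∃ x, ∃ q : G.Walk u x, q.support.Sublist p.support ∧ q.edges ⊆ p.edges ∧
      q.edges.getLast? = some e := by
  induction p with
  | nil => exact absurd he List.not_mem_nil
  | @cons u v w f hf p ih =>
    by_cases hef : e = f
    · subst hef
      refine ⟨v, .cons e hf (.nil v), .cons_cons _ ?_, by simp [edges], rfl⟩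
      cases p <;> simp [support]
    · obtain ⟨x, q, hqs, hqe, hlast⟩ := ih ((List.mem_cons.1 he).resolve_left hef)
      refine ⟨x, .cons f hf q, hqs.cons_cons _, List.cons_subset_cons _ hqe, ?_⟩
      rw [edges, List.getLast?_cons, hlast, Option.getD_some]

theorem exists_sPath {p : G.Walk s w} (hp : p.support.Nodup) (he : e ∈ p.edges) :
    ∃ q : G.SPath s, q.walk.edges.getLast? = some e ∧ q.walk.edges ⊆ p.edges := by
  obtain ⟨x, q, hqs, hqe, hlast⟩ := p.exists_prefix he
  exact ⟨⟨x, q, hp.sublist hqs, fun h => by simp [h] at hlast⟩, hlast, hqe⟩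

end Walk

theorem ReachableIn.concat (h : G.ReachableIn X u x) (he : G.inc e = s(x, y)) (hy : y ∈ X) :
    G.ReachableIn X u y := by
  obtain ⟨p, hp⟩ := h
  induction p with
  | nil v => exact ⟨.cons e he (.nil y), by simpa [Walk.support, hy] using hp⟩
  | cons f hf p ih =>
    obtain ⟨hu, hp⟩ := List.forall_mem_cons.1 hp
    obtain ⟨q, hq⟩ := ih he hp
    exact ⟨.cons f hf q, List.forall_mem_cons.2 ⟨hu, hq⟩⟩

theorem ReachableIn.mem_of_cut_subset {Z : Set V} (h : G.ReachableIn X x y)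
    (hZ : G.cut Z ⊆ G.cut X) (hx : x ∈ Z) : y ∈ Z := by
  obtain ⟨p, hp⟩ := h
  exact p.mem_of_mem_support (fun e he heZ => p.notMem_cut_of_support hp e he (hZ heZ)) hx y
    p.end_mem_support

/-- The cut around the set `Y` of all vertices joined to `t` outside `X` is minimal, because every
edge of it joins the connected sets `X` and `Y`. -/
theorem exists_isMinSepCut_subset (hX : ∀ x ∈ X, G.ReachableIn X s x) (hs : s ∈ X) (ht : t ∉ X) :
    ∃ C ⊆ G.cut X, G.IsMinSepCut {s} {t} C := by
  let Y : Set V := {y | G.ReachableIn Xᶜ t y}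
  have htY : t ∈ Y := ⟨.nil t, by simpa [Walk.support] using ht⟩
  have hYX : Y ⊆ Xᶜ := fun y ⟨p, hp⟩ => hp y p.end_mem_support
  have hcut : ∀ e ∈ G.cut Y, ∃ x y, G.inc e = s(x, y) ∧ x ∈ X ∧ y ∈ Y := by
    rintro e ⟨y, x, he, hy, hx⟩
    exact ⟨x, y, he.trans Sym2.eq_swap, by_contra fun hxX => hx (ReachableIn.concat hy he hxX), hy⟩
  have hsub : G.cut Y ⊆ G.cut X := by
    intro e he
    obtain ⟨x, y, hxy, hx, hy⟩ := hcut e he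
    exact ⟨x, y, hxy, hx, hYX hy⟩
  refine ⟨G.cut Y, hsub, ⟨Yᶜ, ?_, ?_, (cut_compl Y).symm⟩, ?_⟩
  · simpa using fun h => hYX h hs
  · simpa using htY
  rintro D ⟨Z, hsZ, htZ, rfl⟩ hZ
  refine hZ.antisymm fun e he => ?_
  obtain ⟨x, y, hxy, hx, hy⟩ := hcut e he
  refine ⟨x, y, hxy, (hX x hx).mem_of_cut_subset (hZ.trans hsub) (hsZ rfl), ?_⟩
  have hZ' : G.cut Zᶜ ⊆ G.cut Xᶜ := by simpa only [cut_compl] using hZ.trans hsub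
  exact ReachableIn.mem_of_cut_subset hy hZ' (htZ t rfl)

theorem IsMinSepCut.isWaveCut (hC : G.IsMinSepCut {s} {t} C) {T : E → Set E}
    (hT : C.PairwiseDisjoint T)
    (h : ∀ e ∈ C, ∃ q : G.SPath s, q.walk.edges.getLast? = some e ∧ ∀ z ∈ q.walk.edges, z ∈ T e) :
    G.IsWaveCut s t C := by
  choose q hlast hq using h
  have hlastEdges : G.lastEdges (Set.range fun e : C => q e e.2) = C := by
    ext e
    constructor
    · rintro ⟨_, ⟨f, rfl⟩, he⟩
      obtain rfl := Option.some_inj.1 ((hlast f f.2).symm.trans he)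
      exact f.2
    · exact fun he => ⟨q e he, ⟨⟨e, he⟩, rfl⟩, hlast e he⟩
  refine ⟨_, ⟨?_, hlastEdges.symm ▸ hC⟩, hlastEdges⟩
  rintro _ ⟨⟨e, he⟩, rfl⟩ _ ⟨⟨f, hf⟩, rfl⟩ hef z hze hzf
  obtain rfl := hT.elim_set he hf z (hq e he z hze) (hq f hf z hzf)
  exact hef rfl

theorem IsEMCut.isMinSepCut (hC : G.IsEMCut s t C) : G.IsMinSepCut {s} {t} C := by
  obtain ⟨⟨X, hs, ht, hCX⟩, P, -, hunique, hcover⟩ := hC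
  refine ⟨⟨X, by simpa using hs, by simpa using ht, hCX⟩, ?_⟩
  rintro D ⟨Z, hsZ, htZ, rfl⟩ hZ
  refine hZ.antisymm fun e he => ?_
  obtain ⟨p, hp, hep⟩ := hcover e he
  obtain ⟨f, hfp, hfZ⟩ := p.walk.exists_mem_edges_mem_cut (hsZ rfl) (htZ t rfl)
  exact (hunique p hp).unique ⟨he, hep⟩ ⟨hZ hfZ, hfp⟩ ▸ hfZ

theorem IsEMCut.isWaveCut (hC : G.IsEMCut s t C) : G.IsWaveCut s t C := by
  obtain ⟨-, P, hdisj, hunique, hcover⟩ := id hC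
  refine hC.isMinSepCut.isWaveCut (T := fun e => {z | ∃ p ∈ P, e ∈ p.walk.edges ∧ z ∈ p.walk.edges})
    (Set.pairwiseDisjoint_iff.2 ?_) fun e he => ?_
  · rintro e he f hf ⟨z, ⟨p, hp, hep, hzp⟩, p', hp', hfp, hzp'⟩
    obtain rfl : p = p' := by_contra fun hne => hdisj p hp p' hp' hne z hzp hzp'
    exact (hunique p hp).unique ⟨he, hep⟩ ⟨hf, hfp⟩
  · obtain ⟨p, hp, hep⟩ := hcover e he
    obtain ⟨q, hlast, hq⟩ := Walk.exists_sPath p.support_nodup hep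
    exact ⟨q, hlast, fun z hz => ⟨p, hp, hep, hq hz⟩⟩

/-- The vertices joined to `s` in the graph obtained by deleting the edges in `F`. -/
def side (G : Multigraph V E) (s : V) (F : Set E) : Set V :=
  {x | ∃ p : G.Walk s x, ∀ e ∈ p.edges, e ∉ F}

theorem mem_side_self : s ∈ G.side s F := ⟨.nil s, fun _ h => absurd h List.not_mem_nil⟩

theorem cut_side_subset : G.cut (G.side s F) ⊆ F := by
  rintro e ⟨x, y, he, ⟨p, hp⟩, hy⟩
  by_contra heF
  obtain ⟨q, hq⟩ := p.exists_concat_of_mem (he ▸ Sym2.mem_mk_left x y) (he ▸ Sym2.mem_mk_right x y)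
  exact hy ⟨q, fun z hz => (List.mem_cons.1 (hq hz)).elim (fun h => h ▸ heF) (hp z)⟩

theorem reachableIn_side (hx : x ∈ G.side s F) : G.ReachableIn (G.side s F) s x := by
  obtain ⟨p, hp⟩ := hx
  exact ⟨p, p.mem_of_mem_support (fun e he heF => hp e he (cut_side_subset heF)) mem_side_self⟩

/-- The web whose vertices are the edges of `G`, with an arc between any two edges sharing a
vertex, except into an edge at `s`. Its disjoint paths from the sources to the sinks are the
edge-disjoint walks from `s` to `t`. -/
def edgeWeb (G : Multigraph V E) (s t : V) : Web E where
  Arc e f := s ∉ G.inc f ∧ ∃ x ∈ G.inc e, x ∈ G.inc f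
  source := G.inci s
  sink := G.inci t
  notMem_source_of_arc h hs := h.1 hs

theorem exists_walk_of_reachIn {S : Set E} {a b : E} (h : Web.ReachIn (G.edgeWeb s t) S a b)
    (hb : t ∈ G.inc b) (hx : x ∈ G.inc a) :
    ∃ p : G.Walk x t, ∀ e ∈ p.edges, e ∈ insert a S := by
  induction h using Relation.ReflTransGen.head_induction_on generalizing x with
  | refl =>
    obtain ⟨p, hp⟩ := Walk.exists_cons_of_mem hx hb (.nil t)
    exact ⟨p, fun e he => .inl (List.mem_singleton.1 (hp he))⟩
  | head hac _ ih =>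
    obtain ⟨⟨-, y, hya, hyc⟩, hcS⟩ := hac
    obtain ⟨p, hp⟩ := ih hyc
    obtain ⟨q, hq⟩ := Walk.exists_cons_of_mem hx hya p
    refine ⟨q, fun e he => (List.mem_cons.1 (hq he)).imp_right fun he => ?_⟩
    exact (hp e he).elim (fun h => h ▸ hcS) id

theorem exists_stPath_of_isCrossing (hst : s ≠ t) {a : E} {S : Set E} (ha : s ∈ G.inc a)
    (haS : a ∈ S) (hS : Web.IsCrossing (G.edgeWeb s t) a S) :
    ∃ p : G.STPath s t, (∀ e ∈ p.walk.edges, e ∈ S) ∧ a ∈ p.walk.edges := by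
  obtain ⟨b, hb, hab⟩ := hS.exists_sink
  obtain ⟨p, hp⟩ := exists_walk_of_reachIn hab hb ha
  obtain ⟨q, hq, hqp⟩ := p.exists_bypass
  have hqS : ∀ e ∈ q.edges, e ∈ S := fun e he => Set.insert_eq_of_mem haS ▸ hp e (hqp he)
  obtain ⟨e, heq, hes⟩ := q.exists_mem_edges_mem_cut (X := {s}) rfl hst.symm
  obtain rfl : e = a := hS.inter_source_subset ⟨hqS e heq, (inci_eq_cut s).superset hes⟩
  exact ⟨⟨q, hq⟩, hqS, heq⟩

theorem isEMCut_inci_of_unhindered (hst : s ≠ t) (h : Web.Unhindered (G.edgeWeb s t) ∅) :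
    G.IsEMCut s t (G.inci s) := by
  obtain ⟨Q, hQ, hdisj⟩ := h.linkable_univ
  simp only [Set.sdiff_empty, Set.inter_univ] at hQ hdisj
  have hpath : ∀ a ∈ G.inci s, ∃ p : G.STPath s t, (∀ e ∈ p.walk.edges, e ∈ Q a) ∧
      a ∈ p.walk.edges := fun a ha => exists_stPath_of_isCrossing hst ha (hQ a ha).1 (hQ a ha).2.1
  choose p hpQ hap using hpath
  refine ⟨⟨{s}, rfl, hst.symm, inci_eq_cut s⟩, Set.range fun a : G.inci s => p a a.2, ?_, ?_, ?_⟩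
  · rintro _ ⟨⟨a, ha⟩, rfl⟩ _ ⟨⟨b, hb⟩, rfl⟩ hab e hea heb
    obtain rfl := hdisj.elim_set ha hb e (hpQ a ha e hea) (hpQ b hb e heb)
    exact hab rfl
  · rintro _ ⟨⟨a, ha⟩, rfl⟩
    exact ⟨a, ⟨ha, hap a ha⟩, fun e he =>
      (hQ a ha).2.1.inter_source_subset ⟨hpQ a ha e he.2, he.1⟩⟩
  · exact fun a ha => ⟨p a ha, ⟨⟨a, ha⟩, rfl⟩, hap a ha⟩

section edgeWave

variable {k : Web.Wave E}

theorem mem_roof_of_mem_side (hk : Web.IsWave (G.edgeWeb s t) ∅ k) (hx : x ∈ G.side s k.front)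
    (he : x ∈ G.inc e) : e ∈ k.roof := by
  obtain ⟨p, hp⟩ := hx
  suffices ∀ {u w} (p : G.Walk u w), (∀ e ∈ p.edges, e ∉ k.front) →
      (∀ e, u ∈ G.inc e → e ∈ k.roof) → ∀ e, w ∈ G.inc e → e ∈ k.roof from
    this p hp (fun e he => hk.mem_roof_of_source e he (Set.notMem_empty e)) e he
  intro u w p hp hu
  induction p with
  | nil => exact hu
  | @cons u v w f hf p ih =>
    obtain ⟨hfk, hp⟩ := List.forall_mem_cons.1 hp
    have hint : f ∈ k.interior := (hu f (hf ▸ Sym2.mem_mk_left u v)).resolve_right hfk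
    refine ih hp fun e he => ?_
    by_cases hes : s ∈ G.inc e
    · exact hk.mem_roof_of_source e hes (Set.notMem_empty e)
    · have harc : (G.edgeWeb s t).Arc f e := ⟨hes, v, hf ▸ Sym2.mem_mk_right u v, he⟩
      exact (hk.arc_closed f hint e harc).resolve_right (Set.notMem_empty e)

theorem notMem_side (hk : Web.IsWave (G.edgeWeb s t) ∅ k) (hst : s ≠ t) :
    t ∉ G.side s k.front := by
  intro ht
  obtain ⟨p, hp⟩ := id ht
  obtain ⟨e, hep, het⟩ := p.exists_mem_edges_mem_cut (X := {t}ᶜ) hst (fun h => h rfl)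
  rw [cut_compl, ← inci_eq_cut] at het
  exact hk.interior_disjoint_sink.notMem_of_mem_left
    ((mem_roof_of_mem_side hk ht het).resolve_right (hp e hep)) het

theorem exists_walk_of_isWarp {U : Set E} {pred : E → E} (hU : Web.IsWarp (G.edgeWeb s t) U pred)
    (he : e ∈ U) (hx : x ∈ G.inc e) :
    ∃ p : G.Walk s x, ∀ z ∈ p.edges, Web.OnPath (G.edgeWeb s t).source pred z e := by
  have hsource : ∀ a, s ∈ G.inc a → ∀ x ∈ G.inc a,
      ∃ p : G.Walk s x, ∀ z ∈ p.edges, Web.OnPath (G.edgeWeb s t).source pred z a := by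
    intro a ha x hx
    obtain ⟨p, hp⟩ := (Walk.nil s).exists_concat_of_mem ha hx
    exact ⟨p, fun z hz => List.mem_singleton.1 (hp hz) ▸ .refl⟩
  induction hU.rooted e he generalizing x with
  | @base a ha => exact hsource a ha x hx
  | @step e _ ih =>
    by_cases hes : s ∈ G.inc e
    · exact hsource e hes x hx
    obtain ⟨-, y, hyp, hye⟩ := hU.arc_pred e he hes
    obtain ⟨p, hp⟩ := ih (hU.pred_mem e he hes) hyp
    obtain ⟨q, hq⟩ := p.exists_concat_of_mem hye hx
    refine ⟨q, fun z hz => ?_⟩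
    rcases List.mem_cons.1 (hq hz) with rfl | hz
    · exact .refl
    · exact .tail (hp z hz) ⟨hes, rfl⟩

theorem exists_sPath_of_mem_front (hk : Web.IsWave (G.edgeWeb s t) ∅ k) (he : e ∈ k.front)
    (hy : y ∈ G.inc e) (hyk : y ∉ G.side s k.front) :
    ∃ q : G.SPath s, q.walk.edges.getLast? = some e ∧
      ∀ z ∈ q.walk.edges, Web.OnPath (G.edgeWeb s t).source k.pred z e := by
  have heU := hk.front_subset_verts he
  obtain ⟨p, hp⟩ := exists_walk_of_isWarp hk.toIsWarp heU hy
  obtain ⟨q, hq, hqp⟩ := p.exists_bypass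
  obtain ⟨f, hfq, hfcut⟩ := q.exists_mem_edges_mem_cut mem_side_self hyk
  have hfk := cut_side_subset hfcut
  obtain rfl : f = e := (hk.eq_or_mem_interior_of_onPath (hp f (hqp hfq)) heU).resolve_right
    (hk.interior_disjoint_front.notMem_of_mem_right hfk)
  obtain ⟨r, hlast, hr⟩ := Walk.exists_sPath hq hfq
  exact ⟨r, hlast, fun z hz => hp z (hqp (hr hz))⟩

end edgeWave

/-- A hindrance in the edge web yields a wave whose cut lies in the front of the hindrance, hence
misses an edge at `s`. -/
theorem unhindered_edgeWeb (hst : s ≠ t) (h : ∀ C, G.IsWaveCut s t C → C = G.inci s) :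
    Web.Unhindered (G.edgeWeb s t) ∅ := by
  by_contra hhin
  obtain ⟨k, a, hk⟩ := Web.exists_isHindrance hhin
  obtain ⟨C, hC, hmin⟩ := exists_isMinSepCut_subset (fun x => reachableIn_side) mem_side_self
    (notMem_side hk.toIsWave hst)
  have hCk := hC.trans cut_side_subset
  have hwave : G.IsWaveCut s t C := by
    refine hmin.isWaveCut
      (T := fun e => {z | Web.OnPath (G.edgeWeb s t).source k.pred z e}) ?_ ?_
    · refine Set.pairwiseDisjoint_iff.2 ?_
      rintro e he f hf ⟨z, hze, hzf⟩
      exact hk.front_eq_of_onPath (hCk he) (hCk hf) hze hzf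
    · intro e he
      obtain ⟨x, y, hxy, -, hy⟩ := hC he
      exact exists_sPath_of_mem_front hk.toIsWave (hCk he) (hxy ▸ Sym2.mem_mk_right x y) hy
  have haC : a ∈ C := h C hwave ▸ hk.mem_source
  exact hk.interior_disjoint_front.notMem_of_mem_left hk.mem_interior (hCk haC)

end Multigraph

/-- If there is no non-trivial `st`-wave (every `st`-wave has `δ(s)` as its set
of last edges), then some system of pairwise edge-disjoint `st`-paths covers
`δ(s)`, and `δ(s)` is the unique Erdős–Menger `st`-cut. -/
theorem no_nontrivial_wave_covers {V : Type u} {E : Type v}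
    (G : Multigraph V E) (s t : V) (hst : s ≠ t)
    (hnowave : ∀ W : Set (G.SPath s), G.IsWave s {t} W →
      G.lastEdges W = G.inci s) :
    (∃ P : Set (G.STPath s t), G.STPathDisjoint P ∧
      ∀ e ∈ G.inci s, ∃ p ∈ P, e ∈ p.walk.edges) ∧
    G.IsEMCut s t (G.inci s) ∧
    (∀ C : Set E, G.IsEMCut s t C → C = G.inci s) := by
  have hcut : ∀ C, G.IsWaveCut s t C → C = G.inci s := by
    rintro _ ⟨W, hW, rfl⟩
    exact hnowave W hW
  have hEM : G.IsEMCut s t (G.inci s) :=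
    Multigraph.isEMCut_inci_of_unhindered hst (Multigraph.unhindered_edgeWeb hst hcut)
  obtain ⟨-, P, hdisj, -, hcover⟩ := id hEM
  exact ⟨⟨P, hdisj, hcover⟩, hEM, fun C hC => hcut C hC.isWaveCut⟩
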